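/- There exist a constant c > 0 and an integer d₀ such that for all d ≥ d₀, every d-regular graph G has a spanning subgraph H with girth at least 6 (i.e., H contains no triangle, no 4-cycle and no 5-cycle) and minimum degree δ(H) ≥ c·√d. -/

import Mathlib

open SimpleGraph

def ContainsCopy {α β : Type*} (F : SimpleGraph α) (H : SimpleGraph β) : Prop :=
  ∃ f : F →g H, Function.Injective f

abbrev GraphFamily := Set (Σ n : ℕ, SimpleGraph (Fin n))

def FamFree {β : Type*} (H : SimpleGraph β) (𝓕 : GraphFamily) : Prop :=
  ∀ F ∈ 𝓕, ¬ ContainsCopy F.2 H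

noncomputable def extremalNum (n : ℕ) (𝓕 : GraphFamily) : ℕ :=
  sSup {k | ∃ H : SimpleGraph (Fin n), FamFree H 𝓕 ∧ k = H.edgeSet.ncard}

def LocallyInjective {α β : Type*} {F : SimpleGraph α} {G : SimpleGraph β}
    (φ : F →g G) : Prop :=
  ∀ v : α, Set.InjOn φ (F.neighborSet v)

def NoLocInjHom {α β : Type*} (F : SimpleGraph α) (G : SimpleGraph β) : Prop :=
  ¬ ∃ φ : F →g G, LocallyInjective φ

def ClosedFamily (𝓕 : GraphFamily) : Prop :=
  ∀ (W : Type) [Fintype W] (G : SimpleGraph W),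
    (∀ F ∈ 𝓕, NoLocInjHom F.2 G) ↔ FamFree G 𝓕

noncomputable def deg {β : Type*} (H : SimpleGraph β) (v : β) : ℕ :=
  (H.neighborSet v).ncard

noncomputable def minDeg {β : Type*} [Fintype β] (H : SimpleGraph β) : ℕ :=
  ⨅ v, deg H v

noncomputable def maxDeg {β : Type*} [Fintype β] (H : SimpleGraph β) : ℕ :=
  ⨆ v, deg H v

def RegularDeg {β : Type*} (G : SimpleGraph β) (d : ℕ) : Prop :=
  ∀ v, deg G v = d

noncomputable def Bad {α γ : Type*} (G : SimpleGraph α) (χ : α → γ) (v : α) : ℕ :=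
  {u | u ∈ G.neighborSet v ∧ ∃ v', v' ∈ G.neighborSet u ∧ v' ≠ v ∧ χ v' = χ v}.ncard

/-!
A maximum cut `B` of `G` is bipartite with all degrees between `d / 2` and `d`, so it suffices to
find a subgraph of `B` without 4-cycles. Colour the vertices by points `(x, y)` over the field with
`q` elements, where `q` is a large multiple of `√d`, and keep only edges whose ends have colours
related by `y + y' = x x'`. This relation contains no 4-cycle, so neither does the subgraph as long
as the colouring is injective on each of its neighbourhoods.

Start with a random colouring by the points with `x` in a half `A` of the field. A vertex `u` of any
colour `l` has about `d / q` neighbours whose colours are related to `l`, and by the local lemma a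
constant fraction of them is usable for `u`, whenever few edges at `u` conflict with `l`. The
vertices at which too many edges conflict with their own colour are recoloured with the remaining
points, where nothing conflicts: Haxell's theorem on independent transversals provides new colours
together with sets of usable neighbours that are disjoint for vertices of the same new colour.
-/

open Finset

section IndependentTransversals

variable {α ι : Type*}

/-- A function `t` choosing, for every class `i ∈ I` of the partition of `W` into the fibres of `c`,
a representative of that class, such that the representatives are pairwise nonadjacent in `E`. -/
def IsIndependentTransversal (E : SimpleGraph α) (W : Finset α) (c : α → ι) (I : Finset ι)
    (t : ι → α) : Prop :=
  ∀ i ∈ I, t i ∈ W ∧ c (t i) = i ∧ ∀ j ∈ I, ¬ E.Adj (t i) (t j)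

namespace IsIndependentTransversal

variable {E E' : SimpleGraph α} {W : Finset α} {c : α → ι} {I : Finset ι} {t : ι → α}

theorem anti (h : E' ≤ E) (ht : IsIndependentTransversal E W c I t) :
    IsIndependentTransversal E' W c I t :=
  fun i hi => ⟨(ht i hi).1, (ht i hi).2.1, fun j hj hadj => (ht i hi).2.2 j hj (h hadj)⟩

theorem update [DecidableEq ι] {i : ι} {x : α}
    (ht : IsIndependentTransversal E W c (I.erase i) t) (hxW : x ∈ W) (hxi : c x = i)
    (hx : ∀ j ∈ I.erase i, ¬ E.Adj x (t j)) :
    IsIndependentTransversal E W c I (Function.update t i x) := by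
  intro j hj
  by_cases hji : j = i
  · subst hji
    refine ⟨by simpa using hxW, by simpa using hxi, fun k hk => ?_⟩
    by_cases hkj : k = j
    · simp [hkj]
    · simpa [hkj] using hx k (mem_erase.2 ⟨hkj, hk⟩)
  · obtain ⟨hW, hc, hadj⟩ := ht j (mem_erase.2 ⟨hji, hj⟩)
    refine ⟨by simpa [hji] using hW, by simpa [hji] using hc, fun k hk => ?_⟩
    by_cases hki : k = i
    · simpa [hki, hji] using fun h => hx j (mem_erase.2 ⟨hji, hj⟩) (E.adj_symm h)
    · simpa [hki, hji] using hadj k (mem_erase.2 ⟨hki, hk⟩)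

theorem critical_edge {x y : α}
    (ht : IsIndependentTransversal (E.deleteEdges {s(x, y)}) W c I t)
    (hE : ¬ IsIndependentTransversal E W c I t) :
    t (c x) = x ∧ t (c y) = y ∧
      ∀ i ∈ I, i ≠ c x → i ≠ c y → ∀ j ∈ I, ¬ E.Adj (t j) (t i) := by
  have endpoints : ∀ i ∈ I, ∀ j ∈ I, E.Adj (t i) (t j) →
      (t i = x ∧ t j = y) ∨ (t i = y ∧ t j = x) := by
    intro i hi j hj hadj
    have hdel := (ht i hi).2.2 j hj
    simpa [SimpleGraph.deleteEdges_adj, hadj, or_iff_not_imp_left] using hdel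
  obtain ⟨i, hi, j, hj, hadj⟩ : ∃ i ∈ I, ∃ j ∈ I, E.Adj (t i) (t j) := by
    by_contra! h
    exact hE fun i hi => ⟨(ht i hi).1, (ht i hi).2.1, h i hi⟩
  have hci := (ht i hi).2.1
  have hcj := (ht j hj).2.1
  refine ⟨?_, ?_, fun k hk hkx hky l hl hlk => ?_⟩
  · rcases endpoints i hi j hj hadj with ⟨rfl, -⟩ | ⟨-, rfl⟩
    · rw [hci]
    · rw [hcj]
  · rcases endpoints i hi j hj hadj with ⟨-, rfl⟩ | ⟨rfl, -⟩
    · rw [hcj]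
    · rw [hci]
  · have hck := (ht k hk).2.1
    rcases endpoints l hl k hk hlk with ⟨-, rfl⟩ | ⟨-, rfl⟩
    · exact hky hck.symm
    · exact hkx hck.symm

/-- Undoes the merging of the class of `y` into the class of `x`. -/
theorem exists_of_merge [DecidableEq ι] [DecidableRel E.Adj] {x y : α}
    (hx : x ∈ W) (hy : y ∈ W) (hxI : c x ∈ I) (hxy : c x ≠ c y)
    (ht : IsIndependentTransversal E {a ∈ W | ¬ E.Adj x a ∧ ¬ E.Adj y a}
      (fun a => if c a = c y then c x else c a) (I.erase (c y)) t) :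
    ∃ t', IsIndependentTransversal E W c I t' := by
  have hxI' : c x ∈ I.erase (c y) := mem_erase.2 ⟨hxy, hxI⟩
  have far : ∀ i ∈ I.erase (c y), ¬ E.Adj x (t i) ∧ ¬ E.Adj y (t i) :=
    fun i hi => (mem_filter.1 (ht i hi).1).2
  have hW : ∀ i ∈ I.erase (c y), t i ∈ W := fun i hi => (mem_filter.1 (ht i hi).1).1
  have class_of_ne : ∀ i ∈ I.erase (c y), i ≠ c x → c (t i) = i := by
    intro i hi hix
    have h := (ht i hi).2.1
    dsimp only at h
    split_ifs at h with hc
    · exact absurd h.symm hix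
    · exact h
  have rest : IsIndependentTransversal E W c ((I.erase (c y)).erase (c x)) t := by
    intro i hi
    obtain ⟨hix, hi⟩ := mem_erase.1 hi
    exact ⟨hW i hi, class_of_ne i hi hix, fun j hj => (ht i hi).2.2 j (mem_of_mem_erase hj)⟩
  by_cases hc : c (t (c x)) = c y
  · have rest_and_y := IsIndependentTransversal.update (I := I.erase (c x)) (i := c y)
      (x := t (c x)) (by rwa [erase_right_comm]) (hW _ hxI') hc fun j hj =>
        (ht _ hxI').2.2 j (by grind)
    refine ⟨_, rest_and_y.update (x := x) hx rfl fun j hj => ?_⟩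
    by_cases hjy : j = c y
    · simpa [hjy] using (far _ hxI').1
    · simpa [hjy] using (far j (by grind)).1
  · have h := (ht _ hxI').2.1
    simp only [hc, if_false] at h
    refine ⟨_, IsIndependentTransversal.update (t := t) (i := c y) (x := y) ?_ hy rfl
      fun j hj => (far j hj).2⟩
    intro i hi
    refine ⟨hW i hi, ?_, (ht i hi).2.2⟩
    by_cases hix : i = c x
    · rw [hix, h]
    · exact class_of_ne i hi hix

end IsIndependentTransversal

/-- Extending `t` by `x` is blocked by an edge `xy`, and by minimality deleting `xy` creates a
transversal; it passes through `x` and `y`, so no other member of it is adjacent to `x` or `y`. -/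
theorem exists_merge_of_minimal [DecidableEq ι] {E : SimpleGraph α} [DecidableRel E.Adj]
    {W : Finset α} {c : α → ι} {I : Finset ι} {x : α} (hxW : x ∈ W) (hxI : c x ∈ I)
    (hmin : Minimal (fun E' => ¬ ∃ t, IsIndependentTransversal E' W c I t) E)
    (hIx : ∃ t, IsIndependentTransversal E W c (I.erase (c x)) t) :
    ∃ y ∈ W, c y ∈ I ∧ c x ≠ c y ∧
      ∃ t, IsIndependentTransversal E {a ∈ W | ¬ E.Adj x a ∧ ¬ E.Adj y a}
        (fun a => if c a = c y then c x else c a) ((I.erase (c y)).erase (c x)) t := by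
  obtain ⟨t, ht⟩ := hIx
  obtain ⟨j, hj, hadj⟩ : ∃ j ∈ I.erase (c x), E.Adj x (t j) := by
    by_contra! h
    exact hmin.prop ⟨_, ht.update hxW rfl h⟩
  obtain ⟨hyW, hyj, -⟩ := ht j hj
  set y := t j
  obtain ⟨hyx, hyI⟩ := mem_erase.1 (hyj ▸ hj)
  obtain ⟨t₁, ht₁⟩ : ∃ t, IsIndependentTransversal (E.deleteEdges {s(x, y)}) W c I t := by
    by_contra h
    have hxy : (E.deleteEdges {s(x, y)}).Adj x y := hmin.le_of_le h (E.deleteEdges_le _) hadj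
    simp [SimpleGraph.deleteEdges_adj] at hxy
  obtain ⟨ht₁x, ht₁y, ht₁_far⟩ := ht₁.critical_edge fun h => hmin.prop ⟨t₁, h⟩
  refine ⟨y, hyW, hyI, hyx.symm, t₁, fun i hi => ?_⟩
  obtain ⟨hix, hiy, hi⟩ : i ≠ c x ∧ i ≠ c y ∧ i ∈ I := by simpa using hi
  have hfar := ht₁_far i hi hix hiy
  refine ⟨?_, by simp [(ht₁ i hi).2.1, hiy], fun k hk => ?_⟩
  · exact mem_filter.2 ⟨(ht₁ i hi).1, ht₁x ▸ hfar _ hxI, ht₁y ▸ hfar _ hyI⟩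
  · exact fun h => hfar k (by simp_all) h.symm

/-- Passing to an edge-minimal counterexample, merging the two classes met by a critical edge and
discarding the neighbours of its ends gives a counterexample with fewer classes. -/
theorem exists_dominating_of_no_independentTransversal [Finite α] [DecidableEq ι]
    (E : SimpleGraph α) (W : Finset α) (c : α → ι) (I : Finset ι) {Y : ι} (hY : Y ∈ I)
    (hI : ¬ ∃ t, IsIndependentTransversal E W c I t)
    (hIY : ∃ t, IsIndependentTransversal E W c (I.erase Y) t) :
    ∃ S ⊆ I, Y ∈ S ∧ ∃ Z ⊆ W, #Z + 2 ≤ 2 * #S ∧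
      ∀ a ∈ W, c a ∈ S → ∃ z ∈ Z, E.Adj z a := by
  classical
  induction hn : #I generalizing E W c I with
  | zero => simp_all
  | succ n ih =>
    obtain ⟨E', hle, hmin⟩ := exists_minimal_le_of_wellFoundedLT
      (fun E' => ¬ ∃ t, IsIndependentTransversal E' W c I t) E hI
    by_cases hne : ∃ x ∈ W, c x = Y
    swap
    · exact ⟨{Y}, by simpa using hY, by simp, ∅, by simp, by simp,
        fun a ha haY => absurd ⟨a, ha, by simpa using haY⟩ hne⟩
    obtain ⟨x, hxW, rfl⟩ := hne
    obtain ⟨y, hyW, hyI, hxy, hmerge⟩ :=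
      exists_merge_of_minimal hxW hY hmin (hIY.imp fun _ ht => ht.anti hle)
    obtain ⟨S, hS, hxS, Z, hZ, hcard, hdom⟩ := ih E' {a ∈ W | ¬ E'.Adj x a ∧ ¬ E'.Adj y a}
      (fun a => if c a = c y then c x else c a) (I.erase (c y)) (mem_erase.2 ⟨hxy, hY⟩)
      (fun ⟨t', ht'⟩ => hmin.prop (ht'.exists_of_merge hxW hyW hY hxy)) hmerge
      (by rw [card_erase_of_mem hyI, hn, Nat.add_sub_cancel])
    refine ⟨insert (c y) S, by grind, by grind, insert x (insert y Z), by grind, ?_, ?_⟩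
    · have hyS : c y ∉ S := fun h => by simpa using hS h
      have := card_insert_le x (insert y Z)
      have := card_insert_le y Z
      rw [card_insert_of_notMem hyS]
      lia
    · intro a haW haS
      by_cases hxa : E'.Adj x a
      · exact ⟨x, by simp, hle hxa⟩
      by_cases hya : E'.Adj y a
      · exact ⟨y, by simp, hle hya⟩
      obtain ⟨z, hz, hza⟩ := hdom a (mem_filter.2 ⟨haW, hxa, hya⟩) (by grind)
      exact ⟨z, by simp [hz], hle hza⟩

/-- Haxell's theorem. -/
theorem exists_independentTransversal [Finite α] [Nonempty α]
    (E : SimpleGraph α) (W : Finset α) (c : α → ι) (I : Finset ι)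
    (h : ∀ S ⊆ I, S.Nonempty → ∀ Z ⊆ W, #Z + 2 ≤ 2 * #S →
      ∃ a ∈ W, c a ∈ S ∧ ∀ z ∈ Z, ¬ E.Adj z a) :
    ∃ t, IsIndependentTransversal E W c I t := by
  classical
  induction I using Finset.induction_on with
  | empty => exact ⟨fun _ => Classical.arbitrary α, by simp [IsIndependentTransversal]⟩
  | insert Y I hY ih =>
    by_contra hnone
    obtain ⟨S, hS, hYS, Z, hZ, hcard, hdom⟩ :=
      exists_dominating_of_no_independentTransversal E W c (insert Y I) (mem_insert_self Y I)
        hnone (by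
          rw [erase_insert hY]
          exact ih fun S hS => h S (hS.trans (subset_insert Y I)))
    obtain ⟨a, haW, haS, ha⟩ := h S hS ⟨Y, hYS⟩ Z hZ hcard
    obtain ⟨z, hz, hza⟩ := hdom a haW haS
    exact ha z hz hza

end IndependentTransversals

section DisjointSubsets

variable {ι Λ V : Type*} [DecidableEq V]

theorem exists_le_card_sdiff_of_sum_card_lt {D : Finset ι} {C : Finset Λ} {S : ι → Λ → Finset V}
    {U : Λ → Finset V} {d m : ℕ} (hd : ∀ l ∈ C, ∀ w, #{v ∈ D | w ∈ S v l} ≤ d)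
    (hS : ∀ v ∈ D, ∀ l ∈ C, 2 * m ≤ #(S v l))
    (hU : d * ∑ l ∈ C, #(U l) < #D * #C * (m + 1)) :
    ∃ v ∈ D, ∃ l ∈ C, m ≤ #(S v l \ U l) := by
  by_contra! hsmall
  have hinter : ∀ v ∈ D, ∀ l ∈ C, m + 1 ≤ #{w ∈ U l | w ∈ S v l} := by
    intro v hv l hl
    have hsplit := card_inter_add_card_sdiff (S v l) (U l)
    have := hS v hv l hl
    have := hsmall v hv l hl
    rw [filter_mem_eq_inter, inter_comm]
    lia
  refine hU.not_ge ?_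
  calc #D * #C * (m + 1)
      = ∑ l ∈ C, ∑ v ∈ D, (m + 1) := by simp; ring
    _ ≤ ∑ l ∈ C, ∑ v ∈ D, #{w ∈ U l | w ∈ S v l} :=
        sum_le_sum fun l hl => sum_le_sum fun v hv => hinter v hv l hl
    _ = ∑ l ∈ C, ∑ w ∈ U l, #{v ∈ D | w ∈ S v l} :=
        sum_congr rfl fun l _ =>
          sum_card_bipartiteAbove_eq_sum_card_bipartiteBelow fun v w => w ∈ S v l
    _ ≤ ∑ l ∈ C, d * #(U l) := sum_le_sum fun l hl => by
        simpa [mul_comm] using sum_le_card_nsmul (U l) _ d fun w _ => hd l hl w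
    _ = d * ∑ l ∈ C, #(U l) := (mul_sum ..).symm

theorem sum_card_biUnion_le [DecidableEq Λ] (C : Finset Λ) (Z : Finset (ι × Λ × Finset V)) {m : ℕ}
    (hZ : ∀ z ∈ Z, z.2.1 ∈ C ∧ #z.2.2 = m) :
    ∑ l ∈ C, #({z ∈ Z | z.2.1 = l}.biUnion fun z => z.2.2) ≤ m * #Z := by
  calc ∑ l ∈ C, #({z ∈ Z | z.2.1 = l}.biUnion fun z => z.2.2)
      ≤ ∑ l ∈ C, #{z ∈ Z | z.2.1 = l} * m :=
        sum_le_sum fun l _ => card_biUnion_le_card_mul _ _ _ fun z hz =>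
          (hZ z (mem_filter.1 hz).1).2.le
    _ = m * #Z := by
        rw [← sum_mul, ← card_eq_sum_card_fiberwise fun z hz => (hZ z hz).1, mul_comm]

theorem exists_subset_disjoint_from_overlaps {D : Finset ι} {C : Finset Λ}
    {S : ι → Λ → Finset V} {Z : Finset (ι × Λ × Finset V)} {d m : ℕ} (hd0 : 0 < d)
    (hd : ∀ l ∈ C, ∀ w, #{v ∈ D | w ∈ S v l} ≤ d) (hS : ∀ v ∈ D, ∀ l ∈ C, 2 * m ≤ #(S v l))
    (hC : 2 * d ≤ #C) (hD : D.Nonempty) (hZ : ∀ z ∈ Z, z.2.1 ∈ C ∧ #z.2.2 = m)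
    (hcard : #Z ≤ 2 * #D) :
    ∃ v ∈ D, ∃ l ∈ C, ∃ Q ⊆ S v l, #Q = m ∧ ∀ z ∈ Z, z.2.1 = l → Disjoint z.2.2 Q := by
  classical
  let U (l : Λ) : Finset V := {z ∈ Z | z.2.1 = l}.biUnion fun z => z.2.2
  have hU : d * ∑ l ∈ C, #(U l) < #D * #C * (m + 1) := by
    calc d * ∑ l ∈ C, #(U l) ≤ d * (m * #Z) := Nat.mul_le_mul_left d (sum_card_biUnion_le C Z hZ)
      _ ≤ d * (m * (2 * #D)) := by gcongr
      _ < d * ((m + 1) * (2 * #D)) := by have := hD.card_pos; gcongr; lia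
      _ = #D * (2 * d) * (m + 1) := by ring
      _ ≤ #D * #C * (m + 1) := by gcongr
  obtain ⟨v, hv, l, hl, hfree⟩ := exists_le_card_sdiff_of_sum_card_lt hd hS hU
  obtain ⟨Q, hQ, hQm⟩ := exists_subset_card_eq hfree
  refine ⟨v, hv, l, hl, Q, hQ.trans sdiff_subset, hQm, fun z hz hzl => ?_⟩
  have hzU : z.2.2 ⊆ U l := subset_biUnion_of_mem (fun z => z.2.2) (mem_filter.2 ⟨hz, hzl⟩)
  exact disjoint_of_subset_left hzU (disjoint_of_subset_right hQ disjoint_sdiff)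

/-- The graph on triples `(v, l, Q)` joining two triples that have different first components, the
same second component and overlapping third components: an independent transversal of the classes
with equal first component chooses disjoint sets `Q` for equal `l`. -/
def overlapGraph (ι Λ V : Type*) : SimpleGraph (ι × Λ × Finset V) where
  Adj a b := a.1 ≠ b.1 ∧ a.2.1 = b.2.1 ∧ ¬ Disjoint a.2.2 b.2.2
  symm := ⟨fun _ _ ⟨hne, heq, hmeet⟩ => ⟨hne.symm, heq.symm, fun h => hmeet h.symm⟩⟩
  loopless := ⟨fun _ h => h.1 rfl⟩

theorem exists_disjoint_subsets [Finite ι] [Finite Λ] [Finite V] {D : Finset ι} {C : Finset Λ}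
    {S : ι → Λ → Finset V} {d m : ℕ} (hd0 : 0 < d)
    (hd : ∀ l ∈ C, ∀ w, #{v ∈ D | w ∈ S v l} ≤ d) (hS : ∀ v ∈ D, ∀ l ∈ C, 2 * m ≤ #(S v l))
    (hC : 2 * d ≤ #C) :
    ∃ (h : ι → Λ) (Q : ι → Finset V), ∀ v ∈ D, h v ∈ C ∧ Q v ⊆ S v (h v) ∧ #(Q v) = m ∧
      ∀ v' ∈ D, v ≠ v' → h v = h v' → Disjoint (Q v) (Q v') := by
  classical
  cases nonempty_fintype ι
  cases nonempty_fintype Λ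
  cases nonempty_fintype V
  obtain ⟨l₀, -⟩ : C.Nonempty := card_pos.1 (by lia)
  cases isEmpty_or_nonempty ι
  · exact ⟨fun _ => l₀, fun _ => ∅, fun v => isEmptyElim v⟩
  have : Nonempty (ι × Λ × Finset V) := ⟨Classical.arbitrary ι, l₀, ∅⟩
  let W : Finset (ι × Λ × Finset V) :=
    {a | a.1 ∈ D ∧ a.2.1 ∈ C ∧ a.2.2 ⊆ S a.1 a.2.1 ∧ #a.2.2 = m}
  obtain ⟨t, ht⟩ : ∃ t, IsIndependentTransversal (overlapGraph ι Λ V) W Prod.fst D t := by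
    refine exists_independentTransversal _ _ _ _ fun D' hD' hne Z hZ hcard => ?_
    obtain ⟨v, hv, l, hl, Q, hQ, hQm, hdisj⟩ := exists_subset_disjoint_from_overlaps hd0
      (fun l hl w => (card_le_card (filter_subset_filter _ hD')).trans (hd l hl w))
      (fun v hv => hS v (hD' hv)) hC hne (Z := Z)
      (fun z hz => ⟨(mem_filter.1 (hZ hz)).2.2.1, (mem_filter.1 (hZ hz)).2.2.2.2⟩) (by lia)
    exact ⟨(v, l, Q), by simp [W, hD' hv, hl, hQm, hQ], hv, fun z hz hadj =>
      hadj.2.2 (hdisj z hz hadj.2.1)⟩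
  refine ⟨fun v => (t v).2.1, fun v => (t v).2.2, fun v hv => ?_⟩
  obtain ⟨hW, hv', hindep⟩ := ht v hv
  obtain ⟨-, hC', hsub, hm⟩ := (mem_filter.1 hW).2
  refine ⟨hC', by simpa [hv'] using hsub, hm, fun v' hv'D hne heq => ?_⟩
  by_contra hmeet
  exact hindep v' hv'D ⟨by rwa [hv', (ht v' hv'D).2.1], heq, hmeet⟩

end DisjointSubsets

section ProductSpace

variable {V K : Type*} [Fintype V] [DecidableEq V] [Fintype K]

/-- Exchanges the values of two functions outside `S`. This bijection expresses the independence of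
an event determined on `S` and one determined outside `S`. -/
def exchangeOff (S : Finset V) : (V → K) × (V → K) ≃ (V → K) × (V → K) where
  toFun p := (S.piecewise p.1 p.2, S.piecewise p.2 p.1)
  invFun p := (S.piecewise p.1 p.2, S.piecewise p.2 p.1)
  left_inv p := by ext v <;> by_cases hv : v ∈ S <;> simp [hv]
  right_inv p := by ext v <;> by_cases hv : v ∈ S <;> simp [hv]

theorem card_filter_and_mul_card_fun {S : Finset V} {P Q : (V → K) → Prop} [DecidablePred P]
    [DecidablePred Q] (hP : DependsOn P (S : Set V)) (hQ : DependsOn Q (S : Set V)ᶜ) :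
    #{f | P f ∧ Q f} * Fintype.card (V → K) = #{f | P f} * #{f | Q f} := by
  rw [← card_univ, ← card_product, ← card_product]
  refine card_equiv (exchangeOff S) fun p => ?_
  have hP' : P (S.piecewise p.1 p.2) = P p.1 := hP fun v hv => by simp [mem_coe.1 hv]
  have hQ' : Q (S.piecewise p.2 p.1) = Q p.1 := hQ fun v hv => by
    simp [show v ∉ S by simpa using hv]
  simp [exchangeOff, hP', hQ']

theorem card_filter_le_of_forall_piecewise [Nonempty K] (S : Finset V) {E : (V → K) → Prop}
    [DecidablePred E] {C : ℝ} (hC : ∀ f₀, (#{g | E (S.piecewise g f₀)} : ℝ) ≤ C) :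
    (#{f | E f} : ℝ) ≤ C := by
  have hswap : #{f | E f} * Fintype.card (V → K) = ∑ f₀, #{g | E (S.piecewise g f₀)} := by
    calc #{f | E f} * Fintype.card (V → K)
        = #(univ.filter E ×ˢ (univ : Finset (V → K))) := by rw [card_product, card_univ]
      _ = #{p : (V → K) × (V → K) | E (S.piecewise p.2 p.1)} :=
          card_equiv ((exchangeOff S).trans (Equiv.prodComm _ _)) fun p => by
            have : S.piecewise (S.piecewise p.1 p.2) (S.piecewise p.2 p.1) = p.1 := by
              ext v; by_cases hv : v ∈ S <;> simp [hv]
            simp [exchangeOff, this]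
      _ = ∑ f₀, #{g | E (S.piecewise g f₀)} := by
          simp_rw [card_filter, Fintype.sum_prod_type]
  have hpos : (0 : ℝ) < Fintype.card (V → K) := by exact_mod_cast Fintype.card_pos
  refine le_of_mul_le_mul_right ?_ hpos
  calc (#{f | E f} : ℝ) * Fintype.card (V → K)
      = ∑ f₀, (#{g | E (S.piecewise g f₀)} : ℝ) := by exact_mod_cast hswap
    _ ≤ C * Fintype.card (V → K) := by
        simpa [mul_comm] using sum_le_card_nsmul univ _ C fun f₀ _ => hC f₀

theorem sum_sum_update (F : (V → K) → ℝ) (a : V) :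
    ∑ f, ∑ k, F (Function.update f a k) = Fintype.card K * ∑ f, F f := by
  let e : (V → K) × K ≃ (V → K) × K :=
    { toFun p := (Function.update p.1 a p.2, p.1 a)
      invFun p := (Function.update p.1 a p.2, p.1 a)
      left_inv p := by simp
      right_inv p := by simp }
  calc ∑ f, ∑ k, F (Function.update f a k) = ∑ p : (V → K) × K, F (e p).1 :=
        (Fintype.sum_prod_type' fun f k => F (Function.update f a k)).symm
    _ = ∑ p : (V → K) × K, F p.1 := e.sum_comp fun p => F p.1
    _ = Fintype.card K * ∑ f, F f := by
        rw [Fintype.sum_prod_type, mul_sum]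
        simp

/-- Reveals the values of `f` one vertex at a time: if revealing `f a` multiplies the weight by at
most `1 + x a` on average, whatever the values seen before, then the total weight is bounded. -/
theorem sum_weight_le [Nonempty K] {W : Finset V → (V → K) → ℝ} {x : V → ℝ}
    (hW : ∀ S f, 0 ≤ W S f)
    (hstep : ∀ S, ∀ a ∉ S, ∀ f, ∑ k, W (insert a S) (Function.update f a k) ≤
      Fintype.card K * (1 + x a) * W S f) (S : Finset V) :
    ∑ f, W S f ≤ Real.exp (∑ v ∈ S, x v) * ∑ f, W ∅ f := by
  induction S using Finset.induction_on with
  | empty => simp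
  | insert a S ha ih =>
    have hpos : (0 : ℝ) < Fintype.card K := by exact_mod_cast Fintype.card_pos
    refine le_of_mul_le_mul_left ?_ hpos
    calc Fintype.card K * ∑ f, W (insert a S) f
        = ∑ f, ∑ k, W (insert a S) (Function.update f a k) := (sum_sum_update _ a).symm
      _ ≤ ∑ f, Fintype.card K * (1 + x a) * W S f := sum_le_sum fun f _ => hstep S a ha f
      _ ≤ ∑ f, Fintype.card K * Real.exp (x a) * W S f := by
          gcongr with f
          · exact hW S f
          · linarith [Real.add_one_le_exp (x a)]
      _ = Fintype.card K * (Real.exp (x a) * ∑ f, W S f) := by rw [← mul_sum]; ring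
      _ ≤ Fintype.card K * (Real.exp (x a) * (Real.exp (∑ v ∈ S, x v) * ∑ f, W ∅ f)) := by gcongr
      _ = _ := by rw [sum_insert ha, Real.exp_add]; ring

end ProductSpace

section LocalLemma

variable {V K ι : Type*} [Fintype V] [DecidableEq V] [Fintype K] [DecidableEq K]
  {A : ι → Finset (V → K)} {B : ι → Finset V} {Δ : ℕ}

/-- The functions avoiding all the events `A i`, `i ∈ T`. -/
def avoiding (A : ι → Finset (V → K)) (T : Finset ι) : Finset (V → K) :=
  (T.biUnion A)ᶜ

theorem mem_avoiding {T : Finset ι} {f : V → K} : f ∈ avoiding A T ↔ ∀ i ∈ T, f ∉ A i := by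
  simp [avoiding]

theorem card_inter_avoiding_le_of_disjoint [Nonempty K] {i : ι} {T : Finset ι}
    (hA : ∀ i, DependsOn (· ∈ A i) (B i : Set V)) (hi : 4 * Δ * #(A i) ≤ Fintype.card (V → K))
    (hT : ∀ j ∈ T, Disjoint (B i) (B j)) :
    4 * Δ * #(A i ∩ avoiding A T) ≤ #(avoiding A T) := by
  have hQ : DependsOn (· ∈ avoiding A T) (B i : Set V)ᶜ := fun f g hfg => by
    simp only [mem_avoiding, eq_iff_iff]
    refine forall₂_congr fun j hj => not_congr (iff_of_eq (hA j fun v hv => hfg v ?_))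
    exact fun hvi => disjoint_left.1 (hT j hj) hvi hv
  have hindep := card_filter_and_mul_card_fun (hA i) hQ
  rw [filter_and, filter_univ_mem, filter_univ_mem] at hindep
  refine Nat.le_of_mul_le_mul_right ?_ (Fintype.card_pos (α := V → K))
  calc 4 * Δ * #(A i ∩ avoiding A T) * Fintype.card (V → K)
      = 4 * Δ * #(A i) * #(avoiding A T) := by
        rw [mul_assoc, hindep, ← mul_assoc]
    _ ≤ #(avoiding A T) * Fintype.card (V → K) := by rw [mul_comm]; gcongr

theorem card_avoiding_le_two_mul [DecidableEq ι] {T T' : Finset ι} (hT' : #(T \ T') ≤ Δ)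
    (hΔ : 0 < Δ) (h : ∀ j ∈ T \ T', 2 * Δ * #(A j ∩ avoiding A T') ≤ #(avoiding A T')) :
    #(avoiding A T') ≤ 2 * #(avoiding A T) := by
  have hcover : avoiding A T' ⊆
      avoiding A T ∪ (T \ T').biUnion fun j => A j ∩ avoiding A T' := by
    intro f hf
    by_cases hfT : f ∈ avoiding A T
    · exact mem_union_left _ hfT
    · obtain ⟨j, hjT, hfj⟩ : ∃ j ∈ T, f ∈ A j := by simpa [mem_avoiding] using hfT
      have hjT' : j ∉ T' := fun hj => mem_avoiding.1 hf j hj hfj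
      exact mem_union_right _ (mem_biUnion.2 ⟨j, by simp [*], by simp [*]⟩)
  have hsum : 2 * Δ * ∑ j ∈ T \ T', #(A j ∩ avoiding A T') ≤ Δ * #(avoiding A T') := by
    rw [mul_sum]
    exact (sum_le_card_nsmul _ _ _ h).trans (Nat.mul_le_mul_right _ hT')
  have hhalf : 2 * ∑ j ∈ T \ T', #(A j ∩ avoiding A T') ≤ #(avoiding A T') :=
    Nat.le_of_mul_le_mul_left (by linarith) hΔ
  have := (card_le_card hcover).trans (card_union_le _ _)
  have := card_biUnion_le (s := T \ T') (t := fun j => A j ∩ avoiding A T')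
  lia

theorem card_inter_avoiding_le [Fintype ι] [Nonempty K]
    (hA : ∀ i, DependsOn (· ∈ A i) (B i : Set V)) (hΔ : 0 < Δ)
    (hdep : ∀ i, #{j | ¬ Disjoint (B i) (B j)} ≤ Δ)
    (hprob : ∀ i, 4 * Δ * #(A i) ≤ Fintype.card (V → K)) (i : ι) (T : Finset ι) :
    2 * Δ * #(A i ∩ avoiding A T) ≤ #(avoiding A T) := by
  classical
  induction T using Finset.strongInduction generalizing i with
  | H T ih =>
    let far : Finset ι := {j ∈ T | Disjoint (B i) (B j)}
    have hfar : far ⊆ T := filter_subset _ _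
    have hnear : #(T \ far) ≤ Δ := (card_le_card fun j hj => by grind).trans (hdep i)
    have hindep : 4 * Δ * #(A i ∩ avoiding A far) ≤ #(avoiding A far) :=
      card_inter_avoiding_le_of_disjoint hA (hprob i) fun j hj => (mem_filter.1 hj).2
    have hmono : #(A i ∩ avoiding A T) ≤ #(A i ∩ avoiding A far) :=
      card_le_card <| inter_subset_inter_left <|
        compl_subset_compl.2 <| biUnion_subset_biUnion_of_subset_left A hfar
    have hhalf : #(avoiding A far) ≤ 2 * #(avoiding A T) :=
      card_avoiding_le_two_mul hnear hΔ fun j hj =>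
        ih far (hfar.ssubset_of_mem_notMem (mem_sdiff.1 hj).1 (mem_sdiff.1 hj).2) j
    have := Nat.mul_le_mul_left (4 * Δ) hmono
    linarith

omit [DecidableEq K] in
/-- The symmetric Lovász Local Lemma. -/
theorem exists_forall_notMem_of_local [Fintype ι] [Nonempty K]
    (hA : ∀ i, DependsOn (· ∈ A i) (B i : Set V)) (hΔ : 0 < Δ)
    (hdep : ∀ i, #{j | ¬ Disjoint (B i) (B j)} ≤ Δ)
    (hprob : ∀ i, 4 * Δ * #(A i) ≤ Fintype.card (V → K)) :
    ∃ f, ∀ i, f ∉ A i := by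
  classical
  have hpos : ∀ T : Finset ι, 0 < #(avoiding A T) := by
    intro T
    induction T using Finset.induction_on with
    | empty => simpa [avoiding] using Fintype.card_pos (α := V → K)
    | insert i T _ ih =>
      have hi : 2 * #(A i ∩ avoiding A T) ≤ #(avoiding A T) :=
        (Nat.mul_le_mul_right _ (Nat.le_mul_of_pos_right 2 hΔ)).trans
          (card_inter_avoiding_le hA hΔ hdep hprob i T)
      have hinsert : avoiding A (insert i T) = avoiding A T \ A i := by
        ext f; simp [mem_avoiding, and_comm]
      have hsplit := card_sdiff_add_card_inter (avoiding A T) (A i)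
      rw [inter_comm] at hsplit
      rw [hinsert]
      lia
  obtain ⟨f, hf⟩ := card_pos.1 (hpos univ)
  exact ⟨f, fun i => mem_avoiding.1 hf i (mem_univ i)⟩

end LocalLemma

section Concentration

variable {V K : Type*} [DecidableEq K]

/-- The weight `2 ^ (2 * (#X - #(X.image f)) - #Y)`, where `X` and `Y` are the sets of those `v ∈ S`
with `f v ∈ L` and with `f v ∈ A v`; it is set to `0` when `#X` exceeds `t`. It is large when `f`
has many collisions on `X` or few values in the sets `A v`. -/
noncomputable def collisionWeight (L : Finset K) (A : V → Finset K) (t : ℕ) (S : Finset V)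
    (f : V → K) : ℝ :=
  if #{v ∈ S | f v ∈ L} ≤ t then
    (1 / 2) ^ #{v ∈ S | f v ∈ A v} *
      (4 ^ #{v ∈ S | f v ∈ L} / 4 ^ #({v ∈ S | f v ∈ L}.image f))
  else 0

theorem collisionWeight_nonneg (L : Finset K) (A : V → Finset K) (t : ℕ) (S : Finset V)
    (f : V → K) : 0 ≤ collisionWeight L A t S f := by
  unfold collisionWeight
  split_ifs <;> positivity

variable [DecidableEq V]

theorem card_filter_not_unique_add_le (X : Finset V) (f : V → K) :
    #{v ∈ X | ∃ v' ∈ X, v' ≠ v ∧ f v' = f v} + 2 * #(X.image f) ≤ 2 * #X := by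
  set dup : Finset V := {v ∈ X | ∃ v' ∈ X, v' ≠ v ∧ f v' = f v}
  have hdup : 2 * #(dup.image f) ≤ #dup := by
    refine mul_card_image_le_card _ _ fun k hk => ?_
    obtain ⟨v, hv, rfl⟩ := mem_image.1 hk
    obtain ⟨hvX, v', hv'X, hne, heq⟩ := mem_filter.1 hv
    refine one_lt_card.2 ⟨v, by simp [hv], v', ?_, hne.symm⟩
    exact mem_filter.2 ⟨mem_filter.2 ⟨hv'X, v, hvX, hne.symm, heq.symm⟩, heq⟩
  have hsplit : X.image f ⊆ dup.image f ∪ (X \ dup).image f := by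
    rw [← image_union, union_sdiff_of_subset (filter_subset _ _)]
  have hrest := card_image_le (s := X \ dup) (f := f)
  have hcard : #(X \ dup) + #dup = #X := card_sdiff_add_card_eq_card (filter_subset _ _)
  have := (card_le_card hsplit).trans (card_union_le _ _)
  lia

theorem filter_mem_insert_update {S : Finset V} {a : V} (ha : a ∉ S) (A : V → Finset K)
    (f : V → K) (k : K) :
    {v ∈ insert a S | Function.update f a k v ∈ A v} =
      if k ∈ A a then insert a {v ∈ S | f v ∈ A v} else {v ∈ S | f v ∈ A v} := by
  have hS : {v ∈ S | Function.update f a k v ∈ A v} = {v ∈ S | f v ∈ A v} :=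
    filter_congr fun v hv => by rw [Function.update_of_ne (ne_of_mem_of_not_mem hv ha)]
  rw [filter_insert, hS, Function.update_self]

theorem card_filter_mem_insert_update {S : Finset V} {a : V} (ha : a ∉ S) (A : V → Finset K)
    (f : V → K) (k : K) :
    #{v ∈ insert a S | Function.update f a k v ∈ A v} =
      #{v ∈ S | f v ∈ A v} + if k ∈ A a then 1 else 0 := by
  rw [filter_mem_insert_update ha]
  split_ifs <;> simp [ha]

theorem four_pow_collisions_insert_update_le {S : Finset V} {a : V} (ha : a ∉ S) (L : Finset K)
    (f : V → K) (k : K) :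
    (4 : ℝ) ^ #{v ∈ insert a S | Function.update f a k v ∈ L} /
        4 ^ #({v ∈ insert a S | Function.update f a k v ∈ L}.image (Function.update f a k)) ≤
      (if k ∈ {v ∈ S | f v ∈ L}.image f then 4 else 1) *
        (4 ^ #{v ∈ S | f v ∈ L} / 4 ^ #({v ∈ S | f v ∈ L}.image f)) := by
  set X : Finset V := {v ∈ S | f v ∈ L} with hX
  have himage : X.image (Function.update f a k) = X.image f :=
    image_congr fun v hv => Function.update_of_ne
      (ne_of_mem_of_not_mem (mem_filter.1 hv).1 ha) k f
  have haX : a ∉ X := fun h => ha (mem_filter.1 h).1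
  rw [filter_mem_insert_update ha fun _ => L, ← hX]
  by_cases hkL : k ∈ L
  · rw [if_pos hkL, image_insert, himage, Function.update_self, card_insert_of_notMem haX]
    split_ifs with hk
    · rw [insert_eq_of_mem hk, pow_succ]
      exact le_of_eq (by ring)
    · rw [card_insert_of_notMem hk, pow_succ, pow_succ]
      exact le_of_eq (by field_simp)
  · rw [if_neg hkL, himage]
    refine le_mul_of_one_le_left (by positivity) ?_
    split_ifs <;> norm_num

theorem collisionWeight_insert_update_le {S : Finset V} {a : V} (ha : a ∉ S) (L : Finset K)
    (A : V → Finset K) (t : ℕ) (f : V → K) (k : K) :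
    collisionWeight L A t (insert a S) (Function.update f a k) ≤
      (1 + (if k ∈ {v ∈ S | f v ∈ L}.image f then 3 else 0) - (if k ∈ A a then 1 / 2 else 0)) *
        collisionWeight L A t S f := by
  have hpow := four_pow_collisions_insert_update_le ha L f k
  unfold collisionWeight
  by_cases hX : #{v ∈ insert a S | Function.update f a k v ∈ L} ≤ t
  · have hXS : #{v ∈ S | f v ∈ L} ≤ t := by
      rw [card_filter_mem_insert_update ha fun _ => L] at hX
      lia
    rw [if_pos hX, if_pos hXS, card_filter_mem_insert_update ha A, pow_add]
    set q : ℝ := 4 ^ #{v ∈ S | f v ∈ L} / 4 ^ #({v ∈ S | f v ∈ L}.image f)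
    set b : ℝ := (1 / 2) ^ #{v ∈ S | f v ∈ A v}
    have hbq : 0 ≤ b * q := by positivity
    calc b * (1 / 2) ^ (if k ∈ A a then 1 else 0) * _
        ≤ b * (1 / 2) ^ (if k ∈ A a then 1 else 0) *
          ((if k ∈ {v ∈ S | f v ∈ L}.image f then 4 else 1) * q) := by gcongr
      _ ≤ _ := by split_ifs <;> norm_num <;> linarith
  · rw [if_neg hX]
    refine mul_nonneg ?_ (collisionWeight_nonneg L A t S f)
    split_ifs <;> norm_num

variable [Fintype V] [Fintype K] [Nonempty K]

theorem sum_collisionWeight_le (L : Finset K) (A : V → Finset K) (t : ℕ)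
    (S : Finset V) :
    ∑ f, collisionWeight L A t S f ≤
      Real.exp (∑ v ∈ S, (3 * t - #(A v) / 2) / Fintype.card K) * Fintype.card (V → K) := by
  have hK : (Fintype.card K : ℝ) ≠ 0 := by exact_mod_cast Fintype.card_ne_zero
  have hstep : ∀ S, ∀ a ∉ S, ∀ f, ∑ k, collisionWeight L A t (insert a S) (Function.update f a k) ≤
      Fintype.card K * (1 + (3 * t - #(A a) / 2) / Fintype.card K) * collisionWeight L A t S f := by
    intro S a ha f
    refine (sum_le_sum fun k _ => collisionWeight_insert_update_le ha L A t f k).trans ?_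
    rw [← sum_mul]
    by_cases hX : #{v ∈ S | f v ∈ L} ≤ t
    · gcongr
      · exact collisionWeight_nonneg L A t S f
      · have himage : (#({v ∈ S | f v ∈ L}.image f) : ℝ) ≤ t := by
          exact_mod_cast card_image_le.trans hX
        simp only [sum_sub_distrib, sum_add_distrib, sum_ite_mem, univ_inter, sum_const, card_univ,
          nsmul_eq_mul]
        field_simp
        linarith
    · simp [collisionWeight, hX]
  simpa [collisionWeight] using
    sum_weight_le (fun S f => collisionWeight_nonneg L A t S f) hstep S

theorem card_filter_collisions_le (L : Finset K) (A : V → Finset K) (s t : ℕ)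
    (S : Finset V) :
    (#{f : V → K | #{v ∈ S | f v ∈ L} ≤ t ∧
      #{v ∈ S | f v ∈ A v} + 2 * #({v ∈ S | f v ∈ L}.image f) < s + 2 * #{v ∈ S | f v ∈ L}} : ℝ) ≤
      2 ^ s * Real.exp (∑ v ∈ S, (3 * t - #(A v) / 2) / Fintype.card K) *
        Fintype.card (V → K) := by
  set bad : Finset (V → K) := {f | #{v ∈ S | f v ∈ L} ≤ t ∧
    #{v ∈ S | f v ∈ A v} + 2 * #({v ∈ S | f v ∈ L}.image f) < s + 2 * #{v ∈ S | f v ∈ L}}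
  have hweight : ∀ f ∈ bad, 1 ≤ 2 ^ s * collisionWeight L A t S f := by
    intro f hf
    obtain ⟨hX, hlt⟩ := (mem_filter.1 hf).2
    rw [collisionWeight, if_pos hX, one_div, inv_pow, ← div_eq_inv_mul, div_div, ← mul_div_assoc,
      one_le_div (by positivity)]
    calc (4 : ℝ) ^ #({v ∈ S | f v ∈ L}.image f) * 2 ^ #{v ∈ S | f v ∈ A v}
        = 2 ^ (#{v ∈ S | f v ∈ A v} + 2 * #({v ∈ S | f v ∈ L}.image f)) := by
          rw [pow_add, pow_mul]; norm_num [mul_comm]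
      _ ≤ 2 ^ (s + 2 * #{v ∈ S | f v ∈ L}) := pow_le_pow_right₀ one_le_two hlt.le
      _ = 2 ^ s * 4 ^ #{v ∈ S | f v ∈ L} := by rw [pow_add, pow_mul]; norm_num
  calc (#bad : ℝ) = ∑ _f ∈ bad, (1 : ℝ) := by simp
    _ ≤ ∑ f ∈ bad, 2 ^ s * collisionWeight L A t S f := sum_le_sum hweight
    _ ≤ ∑ f, 2 ^ s * collisionWeight L A t S f :=
        sum_le_sum_of_subset_of_nonneg (subset_univ _) fun f _ _ =>
          mul_nonneg (by positivity) (collisionWeight_nonneg L A t S f)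
    _ ≤ _ := by
        rw [← mul_sum, mul_assoc]
        gcongr
        exact sum_collisionWeight_le L A t S

theorem card_filter_lt_card_mul_two_pow_le (S : Finset V) (L : Finset K) (t : ℕ) :
    (#{f : V → K | t < #{v ∈ S | f v ∈ L}} : ℝ) * 2 ^ t ≤
      Real.exp (#S * (#L / Fintype.card K)) * Fintype.card (V → K) := by
  let W (S : Finset V) (f : V → K) : ℝ := 2 ^ #{v ∈ S | f v ∈ L}
  have hstep : ∀ S, ∀ a ∉ S, ∀ f, ∑ k, W (insert a S) (Function.update f a k) ≤
      Fintype.card K * (1 + #L / Fintype.card K) * W S f := by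
    intro S a ha f
    have hsum : ∑ k : K, (2 : ℝ) ^ (if k ∈ L then 1 else 0) = Fintype.card K + #L := by
      have hk : ∀ k : K, (2 : ℝ) ^ (if k ∈ L then 1 else 0) = 1 + if k ∈ L then 1 else 0 :=
        fun k => by split_ifs <;> norm_num
      simp [hk, sum_add_distrib]
    have hK : (Fintype.card K : ℝ) ≠ 0 := by exact_mod_cast Fintype.card_ne_zero
    simp only [W, card_filter_mem_insert_update ha (fun _ => L), pow_add]
    rw [← mul_sum, hsum]
    exact le_of_eq (by field_simp)
  calc (#{f : V → K | t < #{v ∈ S | f v ∈ L}} : ℝ) * 2 ^ t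
      = ∑ f : V → K with t < #{v ∈ S | f v ∈ L}, (2 : ℝ) ^ t := by simp
    _ ≤ ∑ f : V → K with t < #{v ∈ S | f v ∈ L}, W S f := sum_le_sum fun f hf =>
        pow_le_pow_right₀ one_le_two (mem_filter.1 hf).2.le
    _ ≤ ∑ f, W S f := sum_le_sum_of_subset_of_nonneg (filter_subset _ _) fun _ _ _ => by positivity
    _ ≤ Real.exp (∑ _v ∈ S, #L / Fintype.card K) * ∑ f, W ∅ f :=
        sum_weight_le (fun _ _ => by positivity) hstep S
    _ = _ := by simp [W]

end Concentration

section FourCycleFree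

/-- A relation for which no two distinct points are both related to two common distinct points.
For the adjacency relation of a graph this says that the graph has no 4-cycle. -/
def FourCycleFree {α β : Type*} (R : α → β → Prop) : Prop :=
  ∀ ⦃a b x y⦄, R a x → R b x → R a y → R b y → a = b ∨ x = y

theorem not_containsCopy_cycleGraph {V : Type*} {H : SimpleGraph V} (hbip : H.IsBipartite)
    (hfour : FourCycleFree H.Adj) {j : ℕ} (h3 : 3 ≤ j) (h5 : j ≤ 5) :
    ¬ ContainsCopy (cycleGraph j) H := by
  rintro ⟨φ, hφ⟩
  have not_odd : ¬ Odd j := fun hodd => by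
    have hcol := chromaticNumber_le_iff_colorable.2 (Colorable.of_hom φ hbip)
    rw [chromaticNumber_cycleGraph_of_odd j (by lia) hodd] at hcol
    exact absurd hcol (by decide)
  obtain rfl : j = 4 := by
    interval_cases j
    · exact absurd (by decide) not_odd
    · rfl
    · exact absurd (by decide) not_odd
  have h02 : φ 0 ≠ φ 2 := hφ.ne (by decide)
  have h13 : φ 1 ≠ φ 3 := hφ.ne (by decide)
  exact (hfour (φ.map_adj (by decide : (cycleGraph 4).Adj 0 1))
    (φ.map_adj (by decide : (cycleGraph 4).Adj 2 1))
    (φ.map_adj (by decide : (cycleGraph 4).Adj 0 3))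
    (φ.map_adj (by decide : (cycleGraph 4).Adj 2 3))).elim h02 h13

/-- The incidence relation of an affine plane without its vertical lines, where `b` is read as the
line `y = b.1 * x - b.2`. This encoding makes the relation symmetric. -/
def Incident {F : Type*} [Add F] [Mul F] (a b : F × F) : Prop :=
  a.2 + b.2 = a.1 * b.1

instance {F : Type*} [Add F] [Mul F] [DecidableEq F] : DecidableRel (Incident (F := F)) :=
  fun _ _ => inferInstanceAs (Decidable (_ = _))

theorem incident_comm {F : Type*} [CommRing F] {a b : F × F} : Incident a b ↔ Incident b a := by
  rw [Incident, Incident, add_comm, mul_comm]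

theorem fourCycleFree_incident {F : Type*} [CommRing F] [IsDomain F] :
    FourCycleFree (Incident (F := F)) := by
  rintro ⟨a₁, a₂⟩ ⟨b₁, b₂⟩ ⟨x₁, x₂⟩ ⟨y₁, y₂⟩ hax hbx hay hby
  simp only [Incident] at hax hbx hay hby
  have hprod : (a₁ - b₁) * (x₁ - y₁) = 0 := by linear_combination hbx + hay - hax - hby
  rcases mul_eq_zero.1 hprod with h | h
  · obtain rfl := sub_eq_zero.1 h
    exact .inl (by rw [add_right_cancel (hax.trans hbx.symm)])
  · obtain rfl := sub_eq_zero.1 h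
    exact .inr (by rw [add_left_cancel (hax.trans hay.symm)])

theorem card_filter_incident {F : Type*} [CommRing F] [Fintype F] [DecidableEq F] (A : Finset F)
    (l : F × F) : #{c ∈ A ×ˢ (univ : Finset F) | Incident l c} = #A := by
  refine card_nbij' Prod.fst (fun x => (x, l.1 * x - l.2)) ?_ ?_ ?_ fun _ _ => rfl
  · exact fun c hc => (mem_product.1 (mem_filter.1 hc).1).1
  · exact fun x hx => mem_filter.2 ⟨by simpa using hx, add_sub_cancel _ _⟩
  · exact fun c hc => Prod.ext rfl (sub_eq_iff_eq_add'.2 (mem_filter.1 hc).2.symm)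

end FourCycleFree

section Graphs

variable {V : Type*}

theorem deg_eq_degree [Fintype V] (H : SimpleGraph V) [DecidableRel H.Adj] (v : V) :
    deg H v = H.degree v := by
  rw [deg, Set.ncard_eq_toFinset_card', ← card_neighborFinset_eq_degree, neighborFinset]

theorem deg_mono [Finite V] {G H : SimpleGraph V} (h : H ≤ G) (v : V) : deg H v ≤ deg G v :=
  Set.ncard_le_ncard fun _ hw => h hw

theorem sum_sum_eq_sum_erase_add_two_mul [Fintype V] [DecidableEq V] {g : V → V → ℕ}
    (hsymm : ∀ x y, g x y = g y x) {u : V} (hu : g u u = 0) :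
    ∑ x, ∑ y, g x y =
      ∑ x ∈ univ.erase u, ∑ y ∈ univ.erase u, g x y + 2 * ∑ y, g u y := by
  have hrow : ∀ x, ∑ y, g x y = g x u + ∑ y ∈ univ.erase u, g x y :=
    fun x => (add_sum_erase univ _ (mem_univ u)).symm
  rw [← add_sum_erase univ _ (mem_univ u), sum_congr rfl fun x _ => hrow x, sum_add_distrib,
    hrow u, hu, sum_congr rfl fun x _ => hsymm x u]
  ring

/-- In a maximum cut, moving `u` to the other side does not increase the number of cut edges. -/
theorem exists_isBipartite_forall_degree_le [Finite V] (G : SimpleGraph V) :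
    ∃ B ≤ G, B.IsBipartite ∧ ∀ u, deg G u ≤ 2 * deg B u := by
  classical
  cases nonempty_fintype V
  let cut (σ : V → Bool) : SimpleGraph V := G ⊓ (⊤ : SimpleGraph Bool).comap σ
  let g (σ : V → Bool) (x y : V) : ℕ := if (cut σ).Adj x y then 1 else 0
  obtain ⟨σ, hmax⟩ := Finite.exists_max fun σ => ∑ x, ∑ y, g σ x y
  refine ⟨cut σ, inf_le_left, ⟨Coloring.mk (fun v => if σ v then 0 else 1) ?_⟩, fun u => ?_⟩
  · rintro x y ⟨-, hxy⟩
    revert hxy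
    cases hx : σ x <;> cases hy : σ y <;> simp [hx, hy]
  have hdecomp : ∀ τ, ∑ x, ∑ y, g τ x y =
      ∑ x ∈ univ.erase u, ∑ y ∈ univ.erase u, g τ x y + 2 * ∑ y, g τ u y :=
    fun τ => sum_sum_eq_sum_erase_add_two_mul (fun x y => by simp only [g, adj_comm]) (by simp [g])
  let σ' := Function.update σ u (!σ u)
  have hrest : ∑ x ∈ univ.erase u, ∑ y ∈ univ.erase u, g σ' x y =
      ∑ x ∈ univ.erase u, ∑ y ∈ univ.erase u, g σ x y :=
    sum_congr rfl fun x hx => sum_congr rfl fun y hy => by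
      simp [g, cut, σ', Function.update_of_ne (ne_of_mem_erase hx),
        Function.update_of_ne (ne_of_mem_erase hy)]
  have hflip : ∑ y, g σ' u y + ∑ y, g σ u y = G.degree u := by
    rw [← card_neighborFinset_eq_degree, neighborFinset_eq_filter, card_filter, ← sum_add_distrib]
    refine sum_congr rfl fun y _ => ?_
    by_cases hy : G.Adj u y
    · cases hσu : σ u <;> cases hσy : σ y <;>
        simp [g, cut, σ', hy, Function.update_of_ne hy.ne', hσu, hσy]
    · simp [g, cut, hy]
  have hdeg : (cut σ).degree u = ∑ y, g σ u y := by
    rw [← card_neighborFinset_eq_degree, neighborFinset_eq_filter, card_filter]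
  have hu := hmax σ'
  rw [hdecomp, hdecomp, hrest] at hu
  rw [deg_eq_degree, deg_eq_degree, hdeg]
  lia

variable {B : SimpleGraph V} {u v w : V}

theorem exists_adj_of_edist_le_succ {n : ℕ} (h : B.edist u w ≤ (n + 1 : ℕ)) :
    ∃ x, B.edist u x ≤ n ∧ (w = x ∨ B.Adj x w) := by
  by_cases hn : B.edist u w ≤ n
  · exact ⟨w, hn, .inl rfl⟩
  have heq : B.edist w u = (n + 1 : ℕ) := by
    rw [edist_comm]
    refine h.antisymm ?_
    push_cast
    exact Order.add_one_le_of_lt (not_le.1 hn)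
  obtain ⟨p, hp⟩ := exists_walk_of_edist_eq_coe heq
  cases p with
  | nil => simp at hp
  | cons hadj q =>
    refine ⟨_, ?_, .inr hadj.symm⟩
    rw [edist_comm]
    exact (edist_le q).trans (by simpa using hp.le)

theorem card_filter_edist_le [Fintype V] [DecidableRel B.Adj] {d : ℕ}
    (hd : ∀ v, B.degree v ≤ d) (u : V) (n : ℕ) : #{w | B.edist u w ≤ n} ≤ (d + 1) ^ n := by
  classical
  induction n with
  | zero => simp [filter_eq]
  | succ n ih =>
    have hcover : ({w | B.edist u w ≤ (n + 1 : ℕ)} : Finset V) ⊆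
        ({x | B.edist u x ≤ n} : Finset V).biUnion fun x => insert x (B.neighborFinset x) := by
      intro w hw
      obtain ⟨x, hx, hxw⟩ := exists_adj_of_edist_le_succ (mem_filter.1 hw).2
      exact mem_biUnion.2 ⟨x, by simpa using hx, by simpa using hxw⟩
    calc _ ≤ _ := card_le_card hcover
      _ ≤ #{x | B.edist u x ≤ n} * (d + 1) := card_biUnion_le_card_mul _ _ _ fun x _ =>
          (card_insert_le _ _).trans (Nat.succ_le_succ (hd x))
      _ ≤ (d + 1) ^ (n + 1) := by rw [pow_succ]; gcongr

theorem card_filter_not_disjoint_ball_le [Fintype V] [DecidableEq V] [DecidableRel B.Adj] {d n : ℕ}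
    (hd : ∀ v, B.degree v ≤ d) (u : V) :
    #{w | ¬ Disjoint ({x | B.edist u x ≤ n} : Finset V) ({x | B.edist w x ≤ n} : Finset V)} ≤
      (d + 1) ^ (n + n) := by
  refine (card_le_card fun w hw => ?_).trans (card_filter_edist_le hd u (n + n))
  obtain ⟨x, hux, hwx⟩ := not_disjoint_iff.1 (mem_filter.1 hw).2
  refine mem_filter.2 ⟨mem_univ w, ?_⟩
  calc B.edist u w ≤ B.edist u x + B.edist x w := SimpleGraph.edist_triangle
    _ ≤ n + n := by
      rw [B.edist_comm (u := x)]
      exact add_le_add (mem_filter.1 hux).2 (mem_filter.1 hwx).2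
    _ = (n + n : ℕ) := by push_cast; rfl

end Graphs

section Coloring

variable {V Λ : Type*} [Fintype V] [DecidableEq V] [DecidableEq Λ]
  (B : SimpleGraph V) [DecidableRel B.Adj] (R : Λ → Λ → Prop) [DecidableRel R]

/-- The neighbours `v` of `u` with a neighbour other than `u` coloured `l`: the edge `uv` could not
be kept if `u` received the colour `l`. -/
def conflicts (χ : V → Λ) (u : V) (l : Λ) : Finset V :=
  {v ∈ B.neighborFinset u | ∃ w ∈ B.neighborFinset v, w ≠ u ∧ χ w = l}

/-- A vertex at which at most `d / 4` edges conflict with its own colour; the other vertices are the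
ones to be recoloured. -/
def IsGood (d : ℕ) (χ : V → Λ) (v : V) : Prop :=
  4 * #(conflicts B χ v (χ v)) ≤ d

instance (d : ℕ) (χ : V → Λ) : DecidablePred (IsGood B d χ) :=
  fun _ => inferInstanceAs (Decidable (_ ≤ _))

/-- The good neighbours `v` of `u` to which an edge can be kept if `u` receives the colour `l`. -/
def available (d : ℕ) (χ : V → Λ) (u : V) (l : Λ) : Finset V :=
  {v ∈ B.neighborFinset u | v ∉ conflicts B χ u l ∧ R l (χ v) ∧ IsGood B d χ v ∧
    ∀ v' ∈ B.neighborFinset u, v' ≠ v → χ v' ≠ χ v}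

/-- More than `t` neighbours of `u` have colours related to `l`. -/
def Crowded (t : ℕ) (χ : V → Λ) (u : V) (l : Λ) : Prop :=
  t < #{v ∈ B.neighborFinset u | R l (χ v)}

instance (t : ℕ) (χ : V → Λ) (u : V) (l : Λ) : Decidable (Crowded B R t χ u l) :=
  inferInstanceAs (Decidable (_ < _))

/-- The vertex `u` has fewer than `s` available neighbours for the colour `l` in spite of a small
number of conflicts, and no crowding near `u` accounts for it. -/
def Starved (d s t : ℕ) (χ : V → Λ) (u : V) (l : Λ) : Prop :=
  ¬ Crowded B R t χ u l ∧
    (∀ v ∈ B.neighborFinset u, ∀ x ∈ B.neighborFinset v, ¬ Crowded B R t χ x l) ∧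
    4 * #(conflicts B χ u l) ≤ d ∧ #(available B R d χ u l) < s

instance (d s t : ℕ) (χ : V → Λ) (u : V) (l : Λ) : Decidable (Starved B R d s t χ u l) :=
  inferInstanceAs (Decidable (_ ∧ _))

section Locality

variable {B R} {χ χ' : V → Λ} {u v : V} {l : Λ} {d s t : ℕ}

omit [Fintype V] [DecidableEq V] [DecidableRel B.Adj] in
theorem edist_le_add_one_of_adj {n : ℕ∞} {w : V} (huv : B.Adj u v) (h : B.edist v w ≤ n) :
    B.edist u w ≤ n + 1 := by
  calc B.edist u w ≤ B.edist u v + B.edist v w := SimpleGraph.edist_triangle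
    _ ≤ 1 + n := add_le_add (edist_eq_one_iff_adj.2 huv).le h
    _ = n + 1 := add_comm _ _

theorem conflicts_congr (h : ∀ w, B.edist u w ≤ 2 → χ w = χ' w) :
    conflicts B χ u l = conflicts B χ' u l := by
  refine filter_congr fun v hv => exists_congr fun w => and_congr_right fun hw => ?_
  rw [mem_neighborFinset] at hv hw
  rw [h w (edist_le_add_one_of_adj (n := 1) hv (edist_eq_one_iff_adj.2 hw).le)]

omit [DecidableEq V] [DecidableEq Λ] in
theorem crowded_congr (h : ∀ w, B.edist u w ≤ 1 → χ w = χ' w) :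
    Crowded B R t χ u l ↔ Crowded B R t χ' u l := by
  have : {v ∈ B.neighborFinset u | R l (χ v)} = {v ∈ B.neighborFinset u | R l (χ' v)} :=
    filter_congr fun v hv => by
      rw [h v (edist_eq_one_iff_adj.2 ((B.mem_neighborFinset u v).1 hv)).le]
  rw [Crowded, Crowded, this]

theorem available_congr (h : ∀ w, B.edist u w ≤ 3 → χ w = χ' w) :
    available B R d χ u l = available B R d χ' u l := by
  refine filter_congr fun v hv => ?_
  have huv := (B.mem_neighborFinset u v).1 hv
  have hN : ∀ w ∈ B.neighborFinset u, χ w = χ' w := fun w hw => h w <|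
    (edist_eq_one_iff_adj.2 ((B.mem_neighborFinset u w).1 hw)).le.trans (by decide)
  have hu : conflicts B χ u l = conflicts B χ' u l :=
    conflicts_congr fun w hw => h w (hw.trans (by decide))
  have hv' : conflicts B χ v (χ' v) = conflicts B χ' v (χ' v) :=
    conflicts_congr fun w hw => h w (edist_le_add_one_of_adj (n := 2) huv hw)
  have hunique : (∀ v' ∈ B.neighborFinset u, v' ≠ v → χ v' ≠ χ' v) ↔
      ∀ v' ∈ B.neighborFinset u, v' ≠ v → χ' v' ≠ χ' v :=
    forall₂_congr fun v' hv' => by rw [hN v' hv']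
  rw [IsGood, IsGood, hN v hv, hu, hv', hunique]

theorem starved_congr (h : ∀ w, B.edist u w ≤ 3 → χ w = χ' w) :
    Starved B R d s t χ u l ↔ Starved B R d s t χ' u l := by
  rw [Starved, Starved, available_congr h,
    conflicts_congr fun w hw => h w (hw.trans (by decide)),
    crowded_congr fun w hw => h w (hw.trans (by decide))]
  refine and_congr_right' (and_congr_left' ?_)
  refine forall₂_congr fun v hv => forall₂_congr fun x hx => not_congr ?_
  refine crowded_congr fun w hw => ?_
  rw [mem_neighborFinset] at hv hx
  exact h w (edist_le_add_one_of_adj (n := 2) hv (edist_le_add_one_of_adj (n := 1) hx hw))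

end Locality

section Probability

theorem card_filter_lt_four_mul_card_le {V K : Type*} [DecidableEq K] {T : Finset V}
    {N : V → Finset V} {g : V → K} {L : Finset K} {d t : ℕ} (hT : #T ≤ d) (hd : 0 < d)
    (hN : ∀ x ∈ T, #{w ∈ N x | g w ∈ L} ≤ t) :
    #{c ∈ L | d < 4 * #{x ∈ T | ∃ w ∈ N x, g w = c}} ≤ 4 * t := by
  set bad : Finset K := {c ∈ L | d < 4 * #{x ∈ T | ∃ w ∈ N x, g w = c}}
  have hcolours : ∀ x ∈ T, #{c ∈ bad | ∃ w ∈ N x, g w = c} ≤ t := by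
    intro x hx
    have hsub : {c ∈ bad | ∃ w ∈ N x, g w = c} ⊆ {w ∈ N x | g w ∈ L}.image g := by
      intro c hc
      obtain ⟨hc, w, hw, rfl⟩ := mem_filter.1 hc
      exact mem_image_of_mem g (mem_filter.2 ⟨hw, (mem_filter.1 hc).1⟩)
    exact (card_le_card hsub).trans (card_image_le.trans (hN x hx))
  refine Nat.le_of_mul_le_mul_right ?_ hd
  calc #bad * d ≤ ∑ c ∈ bad, 4 * #{x ∈ T | ∃ w ∈ N x, g w = c} :=
        card_nsmul_le_sum _ _ _ fun c hc => (mem_filter.1 hc).2.le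
    _ = 4 * ∑ x ∈ T, #{c ∈ bad | ∃ w ∈ N x, g w = c} := by
        rw [← mul_sum]
        exact congrArg (4 * ·) <| sum_card_bipartiteAbove_eq_sum_card_bipartiteBelow
          fun c x => ∃ w ∈ N x, g w = c
    _ ≤ 4 * (#T * t) := by
        gcongr
        exact sum_le_card_nsmul _ _ _ hcolours
    _ ≤ 4 * t * d := by rw [mul_assoc, mul_comm t]; gcongr

variable {B}

theorem conflicts_congr_of_cliqueFree (hB : B.CliqueFree 3) {χ χ' : V → Λ} {u : V}
    (h : ∀ w ∉ B.neighborFinset u, χ w = χ' w) (l : Λ) :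
    conflicts B χ u l = conflicts B χ' u l := by
  refine filter_congr fun v hv => exists_congr fun w => and_congr_right fun hw => ?_
  rw [mem_neighborFinset] at hv hw
  have huw : w ∉ B.neighborFinset u := fun h =>
    hB {u, v, w} (is3Clique_triple_iff.2 ⟨hv, (B.mem_neighborFinset u w).1 h, hw⟩)
  rw [h w huw]

variable {K : Type*} [DecidableEq K]

variable (B) in
/-- The colours in `L` that make a neighbour `v` of `u` good once it is known that no other
neighbour of `u` has the same colour and that `f₀` is the colouring outside the neighbourhood. -/
def goodColours (d : ℕ) (L : Finset K) (f₀ : V → K) (u v : V) : Finset K :=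
  {c ∈ L | 4 * #{x ∈ B.neighborFinset v | ∃ w ∈ B.neighborFinset x \ B.neighborFinset u,
    f₀ w = c} ≤ d}

variable {R} {d r s t : ℕ} {u v : V} {l : Λ} {L : Finset K} {f f₀ : V → K} {e : K → Λ}

theorem isGood_of_mem_goodColours (he : e.Injective)
    (hf : ∀ w ∉ B.neighborFinset u, f w = f₀ w)
    (hunique : ∀ v' ∈ B.neighborFinset u, v' ≠ v → f v' ≠ f v)
    (hv : f v ∈ goodColours B d L f₀ u v) : IsGood B d (e ∘ f) v := by
  refine (Nat.mul_le_mul_left 4 (card_le_card fun x hx => ?_)).trans (mem_filter.1 hv).2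
  obtain ⟨hx, w, hw, hwv, hcol⟩ := mem_filter.1 hx
  have hcol := he hcol
  have hwu : w ∉ B.neighborFinset u := fun h => hunique w h hwv hcol
  exact mem_filter.2 ⟨hx, w, mem_sdiff.2 ⟨hw, hwu⟩, (hf w hwu).symm.trans hcol⟩

theorem card_le_two_mul_card_goodColours (hd : 0 < d) (hv : B.degree v ≤ d) (ht : 8 * t ≤ #L)
    (hN : ∀ x ∈ B.neighborFinset v,
      #{w ∈ B.neighborFinset x \ B.neighborFinset u | f₀ w ∈ L} ≤ t) :
    #L ≤ 2 * #(goodColours B d L f₀ u v) := by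
  have hbad := card_filter_lt_four_mul_card_le hv hd hN
  have hsplit := card_filter_add_card_filter_not (s := L) fun c =>
    4 * #{x ∈ B.neighborFinset v | ∃ w ∈ B.neighborFinset x \ B.neighborFinset u, f₀ w = c} ≤ d
  simp only [not_le] at hsplit
  rw [goodColours]
  lia

variable (B) in
/-- The colours that make a neighbour `v` of `u` available for the colour `l`, under the same
assumptions as for `goodColours`. -/
def candidateColours (d : ℕ) (L : Finset K) (e : K → Λ) (f₀ : V → K) (u : V) (l : Λ) (v : V) :
    Finset K :=
  if v ∈ conflicts B (e ∘ f₀) u l then ∅ else goodColours B d L f₀ u v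

theorem mem_available_of_mem_candidateColours (hB : B.CliqueFree 3) (he : e.Injective)
    (hL : ∀ c, c ∈ L ↔ R l (e c)) (hf : ∀ w ∉ B.neighborFinset u, f w = f₀ w)
    (hvu : v ∈ B.neighborFinset u) (hunique : ∀ v' ∈ B.neighborFinset u, v' ≠ v → f v' ≠ f v)
    (hv : f v ∈ candidateColours B d L e f₀ u l v) : v ∈ available B R d (e ∘ f) u l := by
  have hconf : conflicts B (e ∘ f₀) u l = conflicts B (e ∘ f) u l :=
    conflicts_congr_of_cliqueFree hB (fun w hw => congrArg e (hf w hw).symm) l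
  rw [candidateColours, hconf] at hv
  split_ifs at hv with hvconf
  · exact absurd hv (notMem_empty _)
  · exact mem_filter.2 ⟨hvu, hvconf, (hL _).1 (mem_filter.1 hv).1,
      isGood_of_mem_goodColours he hf hunique hv, fun v' hv' hne => he.ne (hunique v' hv' hne)⟩

theorem card_filter_mem_candidateColours_lt (hB : B.CliqueFree 3) (he : e.Injective)
    (hL : ∀ c, c ∈ L ↔ R l (e c)) (hf : ∀ w ∉ B.neighborFinset u, f w = f₀ w)
    (hs : #(available B R d (e ∘ f) u l) < s) :
    #{v ∈ B.neighborFinset u | f v ∈ candidateColours B d L e f₀ u l v} +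
      2 * #({v ∈ B.neighborFinset u | f v ∈ L}.image f) <
      s + 2 * #{v ∈ B.neighborFinset u | f v ∈ L} := by
  set X := {v ∈ B.neighborFinset u | f v ∈ L}
  set repeated := {v ∈ X | ∃ v' ∈ X, v' ≠ v ∧ f v' = f v}
  have hsub : {v ∈ B.neighborFinset u | f v ∈ candidateColours B d L e f₀ u l v} ⊆
      available B R d (e ∘ f) u l ∪ repeated := by
    intro v hv
    obtain ⟨hvu, hcand⟩ := mem_filter.1 hv
    have hvL : f v ∈ L := by
      rw [candidateColours] at hcand
      split_ifs at hcand
      · exact absurd hcand (notMem_empty _)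
      · exact (mem_filter.1 hcand).1
    by_cases hrep : ∃ v' ∈ X, v' ≠ v ∧ f v' = f v
    · exact mem_union_right _ (mem_filter.2 ⟨mem_filter.2 ⟨hvu, hvL⟩, hrep⟩)
    · refine mem_union_left _ (mem_available_of_mem_candidateColours hB he hL hf hvu ?_ hcand)
      exact fun v' hv' hne heq => hrep ⟨v', mem_filter.2 ⟨hv', heq ▸ hvL⟩, hne, heq⟩
  have hcard := (card_le_card hsub).trans (card_union_le _ _)
  have hrepeated : #repeated + 2 * #(X.image f) ≤ 2 * #X := card_filter_not_unique_add_le X f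
  lia

theorem mul_card_le_sum_card_candidateColours (hB : B.CliqueFree 3) (hd : 0 < d)
    (hdeg : ∀ v, B.degree v ≤ d) (hu : d ≤ 2 * B.degree u) (ht : 8 * t ≤ #L)
    (hL : ∀ c, c ∈ L ↔ R l (e c)) (hf : ∀ w ∉ B.neighborFinset u, f w = f₀ w)
    (hstarved : Starved B R d s t (e ∘ f) u l) :
    d * #L ≤ 8 * ∑ v ∈ B.neighborFinset u, #(candidateColours B d L e f₀ u l v) := by
  obtain ⟨-, hcrowd, hconf, -⟩ := hstarved
  have hconf_eq : conflicts B (e ∘ f) u l = conflicts B (e ∘ f₀) u l :=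
    conflicts_congr_of_cliqueFree hB (fun w hw => congrArg e (hf w hw)) l
  rw [hconf_eq] at hconf
  have hgood : ∀ v ∈ B.neighborFinset u, #L ≤ 2 * #(goodColours B d L f₀ u v) := by
    refine fun v hv => card_le_two_mul_card_goodColours hd (hdeg v) ht fun x hx => ?_
    refine (card_le_card fun w hw => ?_).trans (not_lt.1 (hcrowd v hv x hx))
    obtain ⟨hw, hwL⟩ := mem_filter.1 hw
    obtain ⟨hwx, hwu⟩ := mem_sdiff.1 hw
    exact mem_filter.2 ⟨hwx, (hL _).1 ((hf w hwu).symm ▸ hwL)⟩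
  have hcard : #(B.neighborFinset u \ conflicts B (e ∘ f₀) u l) +
      #(conflicts B (e ∘ f₀) u l) = B.degree u :=
    card_sdiff_add_card_eq_card (filter_subset _ _)
  calc d * #L ≤ 4 * (#(B.neighborFinset u \ conflicts B (e ∘ f₀) u l) * #L) := by
        rw [← mul_assoc]; gcongr; lia
    _ ≤ 4 * ∑ v ∈ B.neighborFinset u \ conflicts B (e ∘ f₀) u l,
          2 * #(candidateColours B d L e f₀ u l v) := by
        gcongr
        refine card_nsmul_le_sum _ _ _ fun v hv => ?_
        obtain ⟨hv, hvconf⟩ := mem_sdiff.1 hv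
        rw [candidateColours, if_neg hvconf]
        exact hgood v hv
    _ = 8 * ∑ v ∈ B.neighborFinset u \ conflicts B (e ∘ f₀) u l,
          #(candidateColours B d L e f₀ u l v) := by rw [← mul_sum, ← mul_assoc]; rfl
    _ ≤ _ := by gcongr; exact sdiff_subset

theorem card_candidates_add_lt_of_starved_piecewise (hB : B.CliqueFree 3) (he : e.Injective)
    (hL : ∀ c, c ∈ L ↔ R l (e c))
    (h : Starved B R d s t (e ∘ (B.neighborFinset u).piecewise f f₀) u l) :
    #{v ∈ B.neighborFinset u | f v ∈ L} ≤ t ∧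
      #{v ∈ B.neighborFinset u | f v ∈ candidateColours B d L e f₀ u l v} +
        2 * #({v ∈ B.neighborFinset u | f v ∈ L}.image f) <
        s + 2 * #{v ∈ B.neighborFinset u | f v ∈ L} := by
  obtain ⟨hcrowd, -, -, hs⟩ := h
  set N := B.neighborFinset u
  have hN : ∀ v ∈ N, N.piecewise f f₀ v = f v := fun v hv => piecewise_eq_of_mem _ _ _ hv
  have hfilter (A : V → Finset K) : {v ∈ N | N.piecewise f f₀ v ∈ A v} = {v ∈ N | f v ∈ A v} :=
    filter_congr fun v hv => by rw [hN v hv]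
  have himage : {v ∈ N | f v ∈ L}.image (N.piecewise f f₀) = {v ∈ N | f v ∈ L}.image f :=
    image_congr fun v hv => hN v (mem_filter.1 hv).1
  have hlt := card_filter_mem_candidateColours_lt hB he hL
    (fun w hw => piecewise_eq_of_notMem N f f₀ hw) hs
  simp only [Crowded, Function.comp_apply, ← hL, not_lt] at hcrowd
  rw [hfilter fun _ => L] at hcrowd
  rw [hfilter fun _ => L, hfilter, himage] at hlt
  exact ⟨hcrowd, hlt⟩

variable [Fintype K]

omit [DecidableEq Λ] [DecidableEq K] in
theorem card_filter_crowded_le [Nonempty K] (he : ∀ l, #{c | R l (e c)} = r)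
    (hdeg : B.degree u ≤ d) (t : ℕ) (l : Λ) :
    (#{f : V → K | Crowded B R t (e ∘ f) u l} : ℝ) ≤
      Real.exp (d * (r / Fintype.card K)) / 2 ^ t * Fintype.card (V → K) := by
  classical
  have hbound := card_filter_lt_card_mul_two_pow_le (B.neighborFinset u) {c | R l (e c)} t
  simp only [mem_filter_univ, he, card_neighborFinset_eq_degree] at hbound
  rw [div_mul_eq_mul_div, le_div_iff₀ (by positivity)]
  refine hbound.trans ?_
  gcongr

omit [DecidableEq K] in
theorem card_filter_starved_le [Nonempty K] (hB : B.CliqueFree 3) (hinj : e.Injective)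
    (he : ∀ l, #{c | R l (e c)} = r) (hd : 0 < d) (hdeg : ∀ v, B.degree v ≤ d)
    (hu : d ≤ 2 * B.degree u) (ht : 8 * t ≤ r) (s : ℕ) (l : Λ) :
    (#{f : V → K | Starved B R d s t (e ∘ f) u l} : ℝ) ≤
      2 ^ s * Real.exp ((3 * t * d - d * r / 16) / Fintype.card K) * Fintype.card (V → K) := by
  classical
  set N := B.neighborFinset u
  refine card_filter_le_of_forall_piecewise N fun f₀ => ?_
  set L : Finset K := {c | R l (e c)}
  have hL : ∀ c, c ∈ L ↔ R l (e c) := fun c => mem_filter_univ c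
  let A := candidateColours B d L e f₀ u l
  set event : Finset (V → K) := {g | Starved B R d s t (e ∘ N.piecewise g f₀) u l}
  obtain hempty | ⟨g₀, hg₀⟩ := event.eq_empty_or_nonempty
  · rw [hempty, card_empty, Nat.cast_zero]; positivity
  have hsum : (d * r : ℝ) ≤ 8 * ∑ v ∈ N, (#(A v) : ℝ) := by
    have := mul_card_le_sum_card_candidateColours hB hd hdeg hu (ht.trans_eq (he l).symm) hL
      (fun w hw => piecewise_eq_of_notMem N g₀ f₀ hw) (mem_filter.1 hg₀).2
    rw [he l] at this
    exact_mod_cast this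
  have hN : (#N : ℝ) ≤ d := by exact_mod_cast hdeg u
  have hexponent : ∑ v ∈ N, (3 * t - #(A v) / 2 : ℝ) / Fintype.card K ≤
      (3 * t * d - d * r / 16) / Fintype.card K := by
    rw [← sum_div, sum_sub_distrib, ← sum_div, sum_const, nsmul_eq_mul]
    gcongr ?_ / _
    nlinarith [mul_le_mul_of_nonneg_right hN (by positivity : (0 : ℝ) ≤ 3 * t)]
  calc (#event : ℝ) ≤ #{g : V → K | #{v ∈ N | g v ∈ L} ≤ t ∧
        #{v ∈ N | g v ∈ A v} + 2 * #({v ∈ N | g v ∈ L}.image g) < s + 2 * #{v ∈ N | g v ∈ L}} := by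
        exact_mod_cast card_le_card <| monotone_filter_right _ fun g _ =>
          card_candidates_add_lt_of_starved_piecewise hB hinj hL
    _ ≤ _ := card_filter_collisions_le L A s t N
    _ ≤ _ := by gcongr

omit [DecidableEq K] in
theorem card_filter_crowded_or_starved_le [Nonempty K] (hB : B.CliqueFree 3) (hinj : e.Injective)
    (he : ∀ l, #{c | R l (e c)} = r) (hd : 0 < d) (hdeg : ∀ v, B.degree v ≤ d)
    (hu : d ≤ 2 * B.degree u) (ht : 8 * t ≤ r) (s : ℕ) (l : Λ) :
    (#{f : V → K | Crowded B R t (e ∘ f) u l ∨ Starved B R d s t (e ∘ f) u l} : ℝ) ≤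
      (Real.exp (d * (r / Fintype.card K)) / 2 ^ t +
        2 ^ s * Real.exp ((3 * t * d - d * r / 16) / Fintype.card K)) * Fintype.card (V → K) := by
  classical
  rw [add_mul]
  refine le_trans ?_ (add_le_add (card_filter_crowded_le he (hdeg u) t l)
    (card_filter_starved_le hB hinj he hd hdeg hu ht s l))
  exact_mod_cast (congrArg card (filter_or _ _ _)).trans_le (card_union_le _ _)

omit [DecidableEq K] in
theorem exists_forall_not_crowded_and_not_starved [Fintype Λ] [Nonempty K] (hB : B.CliqueFree 3)
    (hinj : e.Injective) (he : ∀ l, #{c | R l (e c)} = r) (hd : 0 < d)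
    (hdeg : ∀ v, B.degree v ≤ d) (hdeg' : ∀ v, d ≤ 2 * B.degree v) (ht : 8 * t ≤ r)
    (hprob : 4 * (Fintype.card Λ * (d + 1) ^ 6) *
      (Real.exp (d * (r / Fintype.card K)) / 2 ^ t +
        2 ^ s * Real.exp ((3 * t * d - d * r / 16) / Fintype.card K)) ≤ 1) :
    ∃ f : V → K, ∀ u l, ¬ Crowded B R t (e ∘ f) u l ∧ ¬ Starved B R d s t (e ∘ f) u l := by
  classical
  have : Nonempty Λ := .map e inferInstance
  let ball (u : V) : Finset V := {w | B.edist u w ≤ (3 : ℕ)}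
  let event (i : V × Λ) : Finset (V → K) :=
    {f | Crowded B R t (e ∘ f) i.1 i.2 ∨ Starved B R d s t (e ∘ f) i.1 i.2}
  have hlocal : ∀ i, DependsOn (· ∈ event i) (ball i.1 : Set V) := by
    intro i f g hfg
    have hcongr : ∀ w, B.edist i.1 w ≤ 3 → (e ∘ f) w = (e ∘ g) w :=
      fun w hw => congrArg e (hfg w (by simpa [ball] using hw))
    simp only [event, mem_filter_univ]
    rw [crowded_congr fun w hw => hcongr w (hw.trans (by decide)), starved_congr hcongr]
  have hdep : ∀ i : V × Λ, #{j : V × Λ | ¬ Disjoint (ball i.1) (ball j.1)} ≤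
      Fintype.card Λ * (d + 1) ^ 6 := by
    intro i
    have hprod : ({j | ¬ Disjoint (ball i.1) (ball j.1)} : Finset (V × Λ)) =
        ({w | ¬ Disjoint (ball i.1) (ball w)} : Finset V) ×ˢ univ := by
      ext j; simp
    rw [hprod, card_product, mul_comm, card_univ]
    gcongr
    exact card_filter_not_disjoint_ball_le hdeg i.1
  have hsmall : ∀ i, 4 * (Fintype.card Λ * (d + 1) ^ 6) * #(event i) ≤ Fintype.card (V → K) := by
    intro i
    have hunion := card_filter_crowded_or_starved_le hB hinj he hd hdeg (hdeg' i.1) ht s i.2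
    rify
    calc (4 * (Fintype.card Λ * (d + 1) ^ 6) * #(event i) : ℝ)
        ≤ 4 * (Fintype.card Λ * (d + 1) ^ 6) * (_ * (Fintype.card (V → K) : ℝ)) := by gcongr
      _ ≤ 1 * (Fintype.card (V → K) : ℝ) := by rw [← mul_assoc]; gcongr
      _ = Fintype.card (V → K) := one_mul _
  obtain ⟨f, hf⟩ := exists_forall_notMem_of_local hlocal (by positivity) hdep hsmall
  exact ⟨f, fun u l => not_or.1 fun h => hf (u, l) (mem_filter.2 ⟨mem_univ f, h⟩)⟩

omit [DecidableEq K] in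
theorem exists_forall_le_card_available [Fintype Λ] [Nonempty K] (hB : B.CliqueFree 3)
    (hinj : e.Injective) (he : ∀ l, #{c | R l (e c)} = r) (hd : 0 < d)
    (hdeg : ∀ v, B.degree v ≤ d) (hdeg' : ∀ v, d ≤ 2 * B.degree v) (ht : 8 * t ≤ r)
    (hprob : 4 * (Fintype.card Λ * (d + 1) ^ 6) *
      (Real.exp (d * (r / Fintype.card K)) / 2 ^ t +
        2 ^ s * Real.exp ((3 * t * d - d * r / 16) / Fintype.card K)) ≤ 1) :
    ∃ f : V → K, ∀ u l, 4 * #(conflicts B (e ∘ f) u l) ≤ d →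
      s ≤ #(available B R d (e ∘ f) u l) := by
  obtain ⟨f, hf⟩ := exists_forall_not_crowded_and_not_starved hB hinj he hd hdeg hdeg' ht hprob
  refine ⟨f, fun u l hconf => not_lt.1 fun hlt => (hf u l).2 ?_⟩
  exact ⟨(hf u l).1, fun _ _ x _ => (hf x l).1, hconf, hlt⟩

end Probability

end Coloring

section Recolouring

theorem fourCycleFree_adj_of_injOn {V Λ : Type*} {H : SimpleGraph V} {R : Λ → Λ → Prop} {F : V → Λ}
    (hR : FourCycleFree R) (hF : ∀ ⦃u v⦄, H.Adj u v → R (F u) (F v))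
    (hinj : ∀ u, Set.InjOn F (H.neighborSet u)) : FourCycleFree H.Adj := by
  intro a b x y hax hbx hay hby
  exact (hR (hF hax) (hF hbx) (hF hay) (hF hby)).imp
    (fun hab => hinj x hax.symm hbx.symm hab) (fun hxy => hinj a hax hay hxy)

variable {V Λ : Type*} [Fintype V] [DecidableEq V] [DecidableEq Λ]
  (B : SimpleGraph V) [DecidableRel B.Adj] (R : Λ → Λ → Prop)

/-- The colouring `χ` with the colours of the vertices that are not good replaced by those of
`h`. -/
def recolour (d : ℕ) (χ h : V → Λ) (v : V) : Λ :=
  if IsGood B d χ v then χ v else h v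

/-- The condition for an edge from `u` to `v` to be kept as far as `v` is concerned: the colour of a
good vertex `v` is unique among the neighbours of `u`, and for every other `v` the vertex `u` is one
of the neighbours `Q v` reserved for `v`. -/
def Accepts (d : ℕ) (χ : V → Λ) (Q : V → Finset V) (u v : V) : Prop :=
  (IsGood B d χ v → ∀ v' ∈ B.neighborFinset u, v' ≠ v → χ v' ≠ χ v) ∧
    (¬ IsGood B d χ v → u ∈ Q v)

variable {R} in
/-- The subgraph of the edges whose endpoints have related colours and accept each other. -/
def keptGraph (hR : ∀ a b, R a b → R b a) (d : ℕ) (χ h : V → Λ) (Q : V → Finset V) :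
    SimpleGraph V where
  Adj u v := B.Adj u v ∧ R (recolour B d χ h u) (recolour B d χ h v) ∧
    Accepts B d χ Q u v ∧ Accepts B d χ Q v u
  symm := ⟨fun _ _ ⟨hadj, hrel, huv, hvu⟩ => ⟨hadj.symm, hR _ _ hrel, hvu, huv⟩⟩
  loopless := ⟨fun v ⟨hadj, _⟩ => B.loopless.irrefl v hadj⟩

variable {B R} {d m : ℕ} {χ h : V → Λ} {Q : V → Finset V} {C : Finset Λ}

theorem injOn_recolour (hR : ∀ a b, R a b → R b a) (hχ : ∀ v, χ v ∉ C)
    (hC : ∀ v, ¬ IsGood B d χ v → h v ∈ C)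
    (hQ : ∀ v, ¬ IsGood B d χ v → ∀ v', ¬ IsGood B d χ v' → v ≠ v' → h v = h v' →
      Disjoint (Q v) (Q v')) (u : V) :
    Set.InjOn (recolour B d χ h) ((keptGraph B hR d χ h Q).neighborSet u) := by
  rintro v ⟨-, -, hv, -⟩ v' ⟨hadj', -, hv', -⟩ heq
  by_contra hne
  simp only [recolour] at heq
  split_ifs at heq with hgood hgood' hgood'
  · exact hv.1 hgood v' ((B.mem_neighborFinset u v').2 hadj') (Ne.symm hne) heq.symm
  · exact hχ v (heq ▸ hC v' hgood')
  · exact hχ v' (heq ▸ hC v hgood)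
  · exact disjoint_left.1 (hQ v hgood v' hgood' hne heq) (hv.2 hgood) (hv'.2 hgood')

variable [DecidableRel R]

theorem adj_keptGraph_of_mem_available (hR : ∀ a b, R a b → R b a) {u v : V}
    (hv : v ∈ available B R d χ u (recolour B d χ h u)) (hvQ : ¬ IsGood B d χ u → v ∈ Q u) :
    (keptGraph B hR d χ h Q).Adj u v := by
  obtain ⟨hadj, hconf, hrel, hgood, hunique⟩ := mem_filter.1 hv
  refine ⟨(B.mem_neighborFinset u v).1 hadj, by rwa [recolour, recolour, if_pos hgood],
    ⟨fun _ => hunique, fun hbad => absurd hgood hbad⟩, fun hgood_u u' hu' hne heq => ?_, hvQ⟩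
  rw [recolour, if_pos hgood_u] at hconf
  exact hconf (mem_filter.2 ⟨hadj, u', hu', hne, heq⟩)

theorem le_deg_keptGraph (hR : ∀ a b, R a b → R b a)
    (hgood : ∀ u, IsGood B d χ u → m ≤ #(available B R d χ u (χ u)))
    (hQ : ∀ u, ¬ IsGood B d χ u → Q u ⊆ available B R d χ u (h u) ∧ #(Q u) = m) (u : V) :
    m ≤ deg (keptGraph B hR d χ h Q) u := by
  classical
  rw [deg_eq_degree, ← card_neighborFinset_eq_degree]
  by_cases hu : IsGood B d χ u
  · refine (hgood u hu).trans (card_le_card fun v hv => ?_)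
    rw [mem_neighborFinset]
    exact adj_keptGraph_of_mem_available hR (by rwa [recolour, if_pos hu]) (absurd hu)
  · refine (hQ u hu).2.ge.trans (card_le_card fun v hv => ?_)
    rw [mem_neighborFinset]
    exact adj_keptGraph_of_mem_available hR
      (by rw [recolour, if_neg hu]; exact (hQ u hu).1 hv) fun _ => hv

theorem conflicts_eq_empty (hχ : ∀ v, χ v ∉ C) {l : Λ} (hl : l ∈ C) (u : V) :
    conflicts B χ u l = ∅ :=
  filter_eq_empty_iff.2 fun _ _ ⟨w, _, _, hw⟩ => hχ w (hw ▸ hl)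

theorem exists_fourCycleFree_subgraph [Finite Λ] (hR : ∀ a b, R a b → R b a)
    (hR4 : FourCycleFree R) (hd : 0 < d) (hdeg : ∀ v, B.degree v ≤ d) (hχ : ∀ v, χ v ∉ C)
    (hC : 2 * d ≤ #C)
    (hav : ∀ u l, 4 * #(conflicts B χ u l) ≤ d → 2 * m ≤ #(available B R d χ u l)) :
    ∃ H ≤ B, FourCycleFree H.Adj ∧ ∀ u, m ≤ deg H u := by
  have hdegree : ∀ l ∈ C, ∀ w, #{v | ¬ IsGood B d χ v ∧ w ∈ available B R d χ v l} ≤ d := by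
    refine fun l _ w => (card_le_card fun v hv => ?_).trans (hdeg w)
    have hvw := (B.mem_neighborFinset v w).1 (mem_filter.1 (mem_filter.1 hv).2.2).1
    exact (B.mem_neighborFinset w v).2 hvw.symm
  have hav_C : ∀ v l, l ∈ C → 2 * m ≤ #(available B R d χ v l) :=
    fun v l hl => hav v l (by rw [conflicts_eq_empty hχ hl]; exact Nat.zero_le d)
  obtain ⟨h, Q, hQ⟩ := exists_disjoint_subsets (D := {v | ¬ IsGood B d χ v})
    (S := available B R d χ) hd (by simpa only [filter_filter] using hdegree)
    (fun v _ l hl => hav_C v l hl) hC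
  simp only [mem_filter_univ] at hQ
  refine ⟨keptGraph B hR d χ h Q, fun u v huv => huv.1,
    fourCycleFree_adj_of_injOn hR4 (fun u v huv => huv.2.1) (injOn_recolour hR hχ ?_ ?_),
    le_deg_keptGraph hR (fun u hu => ?_) fun u hu => ⟨(hQ u hu).2.1, (hQ u hu).2.2.1⟩⟩
  · exact fun v hv => (hQ v hv).1
  · exact fun v hv => (hQ v hv).2.2.2
  · exact (Nat.le_mul_of_pos_left m two_pos).trans (hav u (χ u) hu)

end Recolouring

section Parameters

theorem exp_div_two_pow_le {T : ℝ} {t : ℕ} (hT : 0 ≤ T) (ht : 4 * T ≤ t) :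
    Real.exp T / 2 ^ t ≤ Real.exp (-(T / 40)) := by
  have hpow : Real.exp (2 * T) ≤ 2 ^ t := by
    rw [← Real.rpow_natCast, Real.rpow_def_of_pos two_pos]
    refine Real.exp_le_exp.2 ?_
    nlinarith [Real.log_two_gt_d9]
  rw [div_le_iff₀ (by positivity)]
  calc Real.exp T ≤ Real.exp (-(T / 40) + 2 * T) := by gcongr; linarith
    _ ≤ Real.exp (-(T / 40)) * 2 ^ t := by rw [Real.exp_add]; gcongr

theorem two_pow_mul_exp_le {T y : ℝ} {s : ℕ} (hs : s ≤ T / 40) (hy : y ≤ -(T / 20)) :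
    2 ^ s * Real.exp y ≤ Real.exp (-(T / 40)) := by
  have htwo : (2 : ℝ) ≤ Real.exp 1 := by linarith [Real.add_one_le_exp 1]
  calc 2 ^ s * Real.exp y ≤ Real.exp 1 ^ s * Real.exp y := by gcongr
    _ = Real.exp (s + y) := by rw [← Real.exp_nat_mul, mul_one, Real.exp_add]
    _ ≤ Real.exp (-(T / 40)) := by gcongr; linarith

theorem failure_bound_le {d m q r t : ℕ} (hq : 0 < q) (hr : 0 < r) (ht : 4 * d ≤ t * q)
    (htr : 240 * t ≤ r) (hm : 80 * m * q ≤ d) :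
    Real.exp (d * (r / (r * q : ℕ))) / 2 ^ t +
      2 ^ (2 * m) * Real.exp ((3 * t * d - d * r / 16) / (r * q : ℕ)) ≤
      2 * Real.exp (-(d / q / 40)) := by
  have hq' : (0 : ℝ) < q := by exact_mod_cast hq
  have htr' : (240 * t : ℝ) ≤ r := by exact_mod_cast htr
  have hcrowded : Real.exp (d * (r / (r * q : ℕ))) / 2 ^ t ≤ Real.exp (-(d / q / 40)) := by
    have hexponent : (d * (r / (r * q : ℕ)) : ℝ) = d / q := by push_cast; field_simp
    rw [hexponent]
    refine exp_div_two_pow_le (by positivity) ?_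
    rw [← mul_div_assoc, div_le_iff₀ hq']
    exact_mod_cast ht
  have hstarved : 2 ^ (2 * m) * Real.exp ((3 * t * d - d * r / 16) / (r * q : ℕ)) ≤
      Real.exp (-(d / q / 40)) := by
    refine two_pow_mul_exp_le ?_ ?_
    · rw [div_div, le_div_iff₀ (by positivity)]
      exact_mod_cast (by linarith : 2 * m * (q * 40) ≤ d)
    · rw [div_div, ← neg_div, div_le_div_iff₀ (by positivity) (by positivity)]
      push_cast
      have : (0 : ℝ) ≤ (d * q) * (r - 240 * t) := mul_nonneg (by positivity) (sub_nonneg.2 htr')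
      linarith
  linarith

theorem exists_fourCycleFree_subgraph_of_field {V F : Type*} [Finite V] [Field F] [Fintype F]
    {B : SimpleGraph V} {A : Finset F} {d m q t : ℕ} (hF : Fintype.card F = q)
    (hB : B.IsBipartite) (hd : 0 < d)
    (hdeg : ∀ v, deg B v ≤ d) (hdeg' : ∀ v, d ≤ 2 * deg B v) (hA : A.Nonempty)
    (hC : 2 * d + #A * q ≤ q ^ 2) (ht : 4 * d ≤ t * q) (htA : 240 * t ≤ #A) (hm : 80 * m * q ≤ d)
    (hprob : 8 * q ^ 2 * (d + 1) ^ 6 * Real.exp (-(d / q / 40)) ≤ 1) :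
    ∃ H ≤ B, FourCycleFree H.Adj ∧ ∀ u, m ≤ deg H u := by
  classical
  cases nonempty_fintype V
  simp only [deg_eq_degree B] at hdeg hdeg'
  let P : Finset (F × F) := A ×ˢ univ
  have hP : Fintype.card P = #A * q := by
    rw [Fintype.card_coe, card_product, card_univ, hF]
  have hq : 0 < q := hF ▸ Fintype.card_pos
  have : Nonempty P := (hA.product univ_nonempty).to_subtype
  have hlines (l : F × F) : #{c : P | Incident l c} = #A := by
    rw [← card_filter_incident A l, card_filter, card_filter]
    exact sum_coe_sort P fun c => if Incident l c then 1 else 0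
  have hfailure : (4 * (Fintype.card (F × F) * (d + 1) ^ 6) *
      (Real.exp (d * (#A / Fintype.card P)) / 2 ^ t +
        2 ^ (2 * m) * Real.exp ((3 * t * d - d * #A / 16) / Fintype.card P)) : ℝ) ≤ 1 := by
    rw [hP, Fintype.card_prod, hF]
    calc _ ≤ 4 * ((q * q : ℕ) * (d + 1) ^ 6 : ℝ) *
          (2 * Real.exp (-(d / q / 40))) := by
          gcongr
          exact failure_bound_le hq hA.card_pos ht htA hm
      _ = 8 * q ^ 2 * (d + 1) ^ 6 * Real.exp (-(d / q / 40)) := by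
          push_cast; ring
      _ ≤ 1 := hprob
  obtain ⟨f, hf⟩ := exists_forall_le_card_available (hB.cliqueFree (by norm_num))
    (Subtype.val_injective (p := (· ∈ P))) hlines hd hdeg hdeg' (by lia : 8 * t ≤ #A) hfailure
  refine exists_fourCycleFree_subgraph (fun _ _ => incident_comm.1) fourCycleFree_incident hd hdeg
    (fun v => notMem_compl.2 (f v).2) ?_ hf
  rw [card_compl, ← Fintype.card_coe P, hP, Fintype.card_prod, hF]
  lia

theorem eventually_mul_pow_mul_exp_neg_le_one (k : ℕ) {a b : ℝ} (ha : 0 < a) (hb : 0 < b) :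
    ∀ᶠ n : ℕ in Filter.atTop, a * n ^ k * Real.exp (-(b * n)) ≤ 1 := by
  have hlittle := (isLittleO_pow_exp_pos_mul_atTop (k := k) hb).bound (inv_pos.2 ha)
  filter_upwards [tendsto_natCast_atTop_atTop.eventually hlittle] with n hn
  rw [Real.norm_of_nonneg (by positivity), Real.norm_of_nonneg (Real.exp_pos _).le,
    ← div_eq_inv_mul, le_div_iff₀' ha] at hn
  rwa [Real.exp_neg, ← div_eq_mul_inv, div_le_one (Real.exp_pos _)]

theorem mul_exp_neg_div_le {d n q : ℕ} (hn : 1 ≤ n) (hnd : n ^ 2 ≤ d) (hdn : d < (n + 1) ^ 2)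
    (hq : 0 < q) (hqn : q ≤ 2000 * (n + 1)) :
    8 * q ^ 2 * (d + 1) ^ 6 * Real.exp (-(d / q / 40)) ≤
      32000000 * (n + 1 : ℕ) ^ 14 * Real.exp (-(1 / 320000 * (n + 1 : ℕ))) := by
  have hexponent : (1 / 320000 * (n + 1 : ℕ) : ℝ) ≤ d / q / 40 := by
    rw [div_div, le_div_iff₀ (by positivity)]
    have hnat : (n + 1) * (q * 40) ≤ 320000 * d := by nlinarith
    have : ((n + 1 : ℕ) * (q * 40) : ℝ) ≤ 320000 * d := by exact_mod_cast hnat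
    linarith
  calc _ ≤ 8 * (2000 * (n + 1 : ℕ) : ℝ) ^ 2 * ((n + 1 : ℕ) ^ 2) ^ 6 *
        Real.exp (-(1 / 320000 * (n + 1 : ℕ))) := by
        gcongr
        · exact_mod_cast hqn
        · exact_mod_cast hdn
    _ = _ := by ring

theorem eventually_exists_fourCycleFree_subgraph :
    ∀ᶠ n : ℕ in Filter.atTop, ∀ d, n ^ 2 ≤ d → d < (n + 1) ^ 2 →
      ∀ {V : Type*} [Finite V] {B : SimpleGraph V}, B.IsBipartite → (∀ v, deg B v ≤ d) →
        (∀ v, d ≤ 2 * deg B v) → ∃ H ≤ B, FourCycleFree H.Adj ∧ ∀ u, n / 320000 ≤ deg H u := by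
  have hdecay := (Filter.tendsto_add_atTop_nat 1).eventually
    (eventually_mul_pow_mul_exp_neg_le_one 14 (a := 32000000) (b := 1 / 320000)
      (by norm_num) (by norm_num))
  filter_upwards [hdecay, Filter.eventually_ge_atTop 1]
    with n hdecay hn d hnd hdn V _ B hB hle hge
  obtain ⟨q, hq, hlt, hqle⟩ :=
    Nat.exists_prime_lt_and_le_two_mul (1000 * (n + 1)) (by positivity)
  have : Fact q.Prime := ⟨hq⟩
  obtain ⟨A, hA⟩ : ∃ A : Finset (ZMod q), #A = q / 2 := by
    obtain ⟨A, -, hA⟩ := exists_subset_card_eq (s := (univ : Finset (ZMod q))) (n := q / 2)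
      (by rw [card_univ, ZMod.card]; exact Nat.div_le_self q 2)
    exact ⟨A, hA⟩
  have hm : n / 320000 * 320000 ≤ n := Nat.div_mul_le_self n 320000
  refine exists_fourCycleFree_subgraph_of_field (A := A) (t := n + 1) (ZMod.card q) hB
    (by nlinarith) hle hge (card_pos.1 (by lia)) ?_ ?_ ?_ ?_ ?_
  · rw [hA]
    have : q / 2 * 2 ≤ q := Nat.div_mul_le_self q 2
    nlinarith
  · nlinarith
  · lia
  · nlinarith
  · exact (mul_exp_neg_div_le hn hnd hdn hq.pos (by lia)).trans hdecay

end Parameters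

theorem statement10 :
    ∃ (c : ℝ) (d₀ : ℕ), 0 < c ∧
      ∀ d : ℕ, d₀ ≤ d →
        ∀ (V : Type) [Fintype V] (G : SimpleGraph V), RegularDeg G d →
          ∃ H : SimpleGraph V, H ≤ G ∧
            (∀ j : ℕ, 3 ≤ j → j ≤ 5 → ¬ ContainsCopy (cycleGraph j) H) ∧
            ∀ v : V, c * Real.sqrt (d : ℝ) ≤ (deg H v : ℝ) := by
  obtain ⟨n₀, hn₀⟩ := Filter.eventually_atTop.1
    (eventually_exists_fourCycleFree_subgraph.and (Filter.eventually_ge_atTop 1000000))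
  refine ⟨1 / 1000000, n₀ ^ 2, by norm_num, fun d hd V _ G hG => ?_⟩
  obtain ⟨hsubgraph, hlarge⟩ := hn₀ d.sqrt (Nat.le_sqrt'.2 hd)
  obtain ⟨B, hBG, hbip, hdegB⟩ := exists_isBipartite_forall_degree_le G
  obtain ⟨H, hHB, hfour, hdegH⟩ := hsubgraph d d.sqrt_le' d.lt_succ_sqrt' hbip
    (fun v => hG v ▸ deg_mono hBG v) (fun v => hG v ▸ hdegB v)
  refine ⟨H, hHB.trans hBG, fun j => not_containsCopy_cycleGraph (hbip.mono_left hHB) hfour, ?_⟩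
  intro v
  have hsqrt : Real.sqrt d ≤ (d.sqrt + 1 : ℕ) := by exact_mod_cast Real.real_sqrt_le_nat_sqrt_succ
  have hdeg : d.sqrt + 1 ≤ 1000000 * deg H v := by have := hdegH v; lia
  have : ((d.sqrt + 1 : ℕ) : ℝ) ≤ 1000000 * deg H v := by exact_mod_cast hdeg
  linarith
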